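/- arXiv:2210.15730 — 4 statements merged into one kernel-verified Lean document; each statement's English description precedes it below -/
import Mathlib

section
/- Let 0 < a ≤ 1 with 2/a ∈ ℕ and let κ ≥ 1/2. Then the kernel of the one-dimensional (κ,a)-generalized Fourier transform satisfies |b_{κ,a}(x)| ≤ 1 for every x ∈ ℝ, and b_{κ,a}(0) = 1; hence sup_{x∈ℝ} |b_{κ,a}(x)| = 1. -/
open Real MeasureTheory Finset

/-- Normalized Bessel function j_lambda(v). -/
noncomputable def nbessel (l v : ℝ) : ℝ :=
  Real.Gamma (l + 1) *
    ∑' k : ℕ, (-1 : ℝ) ^ k / (Nat.factorial k * Real.Gamma (k + l + 1)) * (v / 2) ^ (2 * k)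

/-- Kernel of the one-dimensional (kappa,a)-generalized Fourier transform. -/
noncomputable def bker (κ a : ℝ) (x : ℝ) : ℂ :=
  (nbessel ((2 * κ - 1) / a) ((2 / a) * |x| ^ (a / 2)) : ℂ)
    + Complex.exp (-(Real.pi / a) * Complex.I) * ((a ^ (-(2 / a)) : ℝ) : ℂ)
      * ((Real.Gamma ((2 * κ - 1) / a + 1) / Real.Gamma ((2 * κ - 1) / a + 1 + 2 / a) : ℝ) : ℂ)
      * (x : ℂ) * (nbessel ((2 * κ - 1) / a + 2 / a) ((2 / a) * |x| ^ (a / 2)) : ℂ)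

/-- The `j`-th term of `∑ (p ^ j / j!) (p ^ (j + m) / (j + m)!)`, the power series of the modified
Bessel function `I_m (2 p)`. -/
noncomputable def besselTerm (p : ℂ) (m j : ℕ) : ℂ :=
  p ^ j / (j.factorial : ℂ) * (p ^ (j + m) / ((j + m).factorial : ℂ))

lemma summable_norm_exp_terms (p : ℂ) : Summable fun n : ℕ => ‖p ^ n / (n.factorial : ℂ)‖ :=
  NormedSpace.norm_expSeries_div_summable p

lemma summable_exp_terms_mul (p : ℂ) :
    Summable fun x : ℕ × ℕ =>
      ‖p ^ x.1 / (x.1.factorial : ℂ) * (p ^ x.2 / (x.2.factorial : ℂ))‖ :=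
  Summable.mul_norm (f := fun n : ℕ => p ^ n / (n.factorial : ℂ))
    (g := fun n : ℕ => p ^ n / (n.factorial : ℂ)) (summable_norm_exp_terms p)
    (summable_norm_exp_terms p)

lemma injective_pair_add (m : ℕ) : Function.Injective fun j : ℕ => (j, j + m) :=
  fun _ _ h => congrArg Prod.fst h

lemma summable_norm_besselTerm (p : ℂ) (m : ℕ) : Summable fun j => ‖besselTerm p m j‖ :=
  (summable_exp_terms_mul p).comp_injective (i := fun j : ℕ => (j, j + m)) (injective_pair_add m)

lemma integral_exp_int_mul_I (n : ℤ) :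
    ∫ θ in (-π)..π, Complex.exp (n * θ * Complex.I) = if n = 0 then 2 * (π : ℂ) else 0 := by
  split_ifs with h
  · simp only [h, Int.cast_zero, zero_mul, Complex.exp_zero, intervalIntegral.integral_const]
    simp; ring
  · have hc : (n * Complex.I : ℂ) ≠ 0 := by simp [h]
    have := integral_exp_mul_complex (a := -π) (b := π) hc
    calc _ = ∫ θ in (-π)..π, Complex.exp (n * Complex.I * θ) := by
          congr 1; ext θ; congr 1; ring
      _ = 0 := by
        rw [this, div_eq_zero_iff]; left
        rw [sub_eq_zero, Complex.exp_eq_exp_iff_exists_int]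
        exact ⟨n, by push_cast; ring_nf⟩

lemma hasSum_exp_mul_exp (p : ℂ) (m : ℕ) (θ : ℝ) :
    HasSum (fun x : ℕ × ℕ => p ^ x.1 / (x.1.factorial : ℂ) * (p ^ x.2 / (x.2.factorial : ℂ)) *
      Complex.exp (((x.1 - x.2 + m : ℤ) : ℂ) * θ * Complex.I))
    (Complex.exp (p * Complex.exp (θ * Complex.I)) *
      Complex.exp (p * Complex.exp (-θ * Complex.I)) * Complex.exp (m * θ * Complex.I)) := by
  have hexp (z : ℂ) : HasSum (fun n : ℕ => z ^ n / (n.factorial : ℂ)) (Complex.exp z) := by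
    rw [Complex.exp_eq_exp_ℂ]
    exact NormedSpace.expSeries_div_hasSum_exp z
  set z := p * Complex.exp (θ * Complex.I) with hz
  set y := p * Complex.exp (-θ * Complex.I) with hy
  have hs : Summable fun x : ℕ × ℕ =>
      z ^ x.1 / (x.1.factorial : ℂ) * (y ^ x.2 / (x.2.factorial : ℂ)) :=
    summable_mul_of_summable_norm (f := fun n : ℕ => z ^ n / (n.factorial : ℂ))
      (g := fun n : ℕ => y ^ n / (n.factorial : ℂ)) (summable_norm_exp_terms z)
      (summable_norm_exp_terms y)
  have h := ((hexp z).mul (hexp y) hs).mul_right (Complex.exp (m * θ * Complex.I))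
  have e : ∀ x : ℕ × ℕ, p ^ x.1 / (x.1.factorial : ℂ) * (p ^ x.2 / (x.2.factorial : ℂ)) *
      Complex.exp (((x.1 - x.2 + m : ℤ) : ℂ) * θ * Complex.I) =
      z ^ x.1 / (x.1.factorial : ℂ) * (y ^ x.2 / (x.2.factorial : ℂ)) *
        Complex.exp (m * θ * Complex.I) := fun x => by
    have : Complex.exp (((x.1 - x.2 + m : ℤ) : ℂ) * θ * Complex.I) =
        Complex.exp (θ * Complex.I) ^ x.1 * Complex.exp (-θ * Complex.I) ^ x.2
          * Complex.exp (m * θ * Complex.I) := by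
      rw [← Complex.exp_nat_mul, ← Complex.exp_nat_mul, ← Complex.exp_add, ← Complex.exp_add]
      congr 1; push_cast; ring
    rw [this, hz, hy, mul_pow, mul_pow]
    ring
  rw [funext e]
  exact h

/-- Bessel's integral for the generating function of the `besselTerm` series. -/
lemma integral_exp_mul_exp (p : ℂ) (m : ℕ) :
    ∫ θ in (-π)..π, Complex.exp (p * Complex.exp (θ * Complex.I)) *
      Complex.exp (p * Complex.exp (-θ * Complex.I)) * Complex.exp (m * θ * Complex.I)
      = 2 * π * ∑' j, besselTerm p m j := by
  have key := intervalIntegral.hasSum_integral_of_dominated_convergence (μ := volume)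
    (a := -π) (b := π) (ι := ℕ × ℕ)
    (F := fun x θ => p ^ x.1 / (x.1.factorial : ℂ) * (p ^ x.2 / (x.2.factorial : ℂ)) *
      Complex.exp (((x.1 - x.2 + m : ℤ) : ℂ) * θ * Complex.I))
    (f := fun θ => Complex.exp (p * Complex.exp (θ * Complex.I)) *
      Complex.exp (p * Complex.exp (-θ * Complex.I)) * Complex.exp (m * θ * Complex.I))
    (fun x _ => ‖p ^ x.1 / (x.1.factorial : ℂ) * (p ^ x.2 / (x.2.factorial : ℂ))‖)
    (fun x => (by fun_prop : Continuous _).aestronglyMeasurable)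
    (fun x => Filter.Eventually.of_forall fun θ _ => by
      rw [norm_mul, ← Complex.ofReal_intCast, ← Complex.ofReal_mul,
        Complex.norm_exp_ofReal_mul_I, mul_one])
    (Filter.Eventually.of_forall fun _ _ => summable_exp_terms_mul p)
    (by simp)
    (Filter.Eventually.of_forall fun θ _ => hasSum_exp_mul_exp p m θ)
  simp only [intervalIntegral.integral_const_mul, integral_exp_int_mul_I] at key
  rw [← key.tsum_eq, ← tsum_mul_left, ← (injective_pair_add m).tsum_eq]
  · refine tsum_congr fun j => ?_
    rw [if_pos (by push_cast; ring), besselTerm]; ring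
  · intro x hx
    by_contra hne
    apply hx
    beta_reduce
    rw [if_neg, mul_zero]
    intro h0
    exact hne ⟨x.1, Prod.ext rfl (by simp only; omega)⟩

lemma norm_besselTerm_tsum_add_le (w δ : ℝ) (hδ : |δ| ≤ 1) (m : ℕ) (hm : m ≠ 0) :
    ‖(∑' j, besselTerm (-Complex.I * w) 0 j) + δ * ∑' j, besselTerm (-Complex.I * w) m j‖ ≤ 1 := by
  set p : ℂ := -Complex.I * w with hp
  set g : ℝ → ℂ := fun θ => Complex.exp (p * Complex.exp (θ * Complex.I)) *
      Complex.exp (p * Complex.exp (-θ * Complex.I)) with hg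
  have hgc : Continuous g := by fun_prop
  have hgn : ∀ θ, ‖g θ‖ = 1 := fun θ => by
    have : p * Complex.exp (θ * Complex.I) + p * Complex.exp (-θ * Complex.I)
        = ((-2 * w * Real.cos θ : ℝ) : ℂ) * Complex.I := by
      push_cast
      rw [Complex.cos, hp]; ring_nf
    rw [hg]; simp only
    rw [← Complex.exp_add, this, Complex.norm_exp_ofReal_mul_I]
  have h0 : ∫ θ in (-π)..π, g θ = 2 * π * ∑' j, besselTerm p 0 j := by
    rw [← integral_exp_mul_exp]; simp [hg]
  have h1 : ∫ θ in (-π)..π, g θ * Complex.exp (m * θ * Complex.I)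
      = 2 * π * ∑' j, besselTerm p m j := integral_exp_mul_exp p m
  have h2 : ∫ θ in (-π)..π, g θ * Complex.exp (-(m * θ * Complex.I))
      = 2 * π * ∑' j, besselTerm p m j := by
    rw [← h1]
    have := intervalIntegral.integral_comp_neg (a := -π) (b := π)
      (fun θ : ℝ => g θ * Complex.exp (m * θ * Complex.I))
    rw [neg_neg] at this
    rw [← this]
    congr 1; ext θ
    simp only [hg]; push_cast
    rw [neg_neg, mul_comm (Complex.exp (p * Complex.exp (-θ * Complex.I)))]
    congr 2; ring
  have h3 : ∫ θ in (-π)..π, g θ * ((1 + δ * Real.cos (m * θ) : ℝ) : ℂ)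
      = 2 * π * ((∑' j, besselTerm p 0 j) + δ * ∑' j, besselTerm p m j) := by
    have e : ∀ θ : ℝ, g θ * ((1 + δ * Real.cos (m * θ) : ℝ) : ℂ)
        = g θ + ((δ / 2 : ℂ) * (g θ * Complex.exp (m * θ * Complex.I))
          + (δ / 2 : ℂ) * (g θ * Complex.exp (-(m * θ * Complex.I)))) := fun θ => by
      push_cast; rw [Complex.cos]; ring_nf
    simp_rw [e]
    rw [intervalIntegral.integral_add, intervalIntegral.integral_add,
      intervalIntegral.integral_const_mul, intervalIntegral.integral_const_mul, h0, h1, h2]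
    · ring
    all_goals exact (by fun_prop : Continuous _).intervalIntegrable _ _
  have hcos : ∫ θ in (-π)..π, (1 + δ * Real.cos (m * θ)) = 2 * π := by
    have hm' : (m : ℝ) ≠ 0 := by exact_mod_cast hm
    rw [intervalIntegral.integral_add (by simp)
      ((by fun_prop : Continuous _).intervalIntegrable _ _), intervalIntegral.integral_const_mul,
      intervalIntegral.integral_comp_mul_left (fun x => Real.cos x) hm', integral_cos]
    simp [Real.sin_nat_mul_pi]; ring
  have hle : ‖∫ θ in (-π)..π, g θ * ((1 + δ * Real.cos (m * θ) : ℝ) : ℂ)‖ ≤ 2 * π := by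
    rw [← hcos]
    refine intervalIntegral.norm_integral_le_of_norm_le (by linarith [pi_pos])
      (Filter.Eventually.of_forall fun θ _ => ?_)
      ((by fun_prop : Continuous _).intervalIntegrable _ _)
    rw [norm_mul, hgn, one_mul, Complex.norm_real, Real.norm_of_nonneg]
    have : |δ * Real.cos (m * θ)| ≤ 1 := by
      rw [abs_mul]; exact mul_le_one₀ hδ (abs_nonneg _) (Real.abs_cos_le_one _)
    linarith [(abs_le.1 this).1]
  rw [h3, norm_mul] at hle
  have hn : ‖(2 * π : ℂ)‖ = 2 * π := by
    rw [← Complex.ofReal_ofNat, ← Complex.ofReal_mul, Complex.norm_real,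
      Real.norm_of_nonneg (by positivity)]
  rw [hn] at hle
  exact le_of_mul_le_mul_left (by linarith) (by positivity : 0 < 2 * π)

/-- The law on `[0, 1]` whose moments are the ratios of the power series coefficients of the
normalized Bessel functions of orders `l` and `0`. -/
lemma exists_measure_moments (l : ℝ) (hl : 0 ≤ l) :
    ∃ μ : Measure ℝ, IsProbabilityMeasure μ ∧ (∀ᵐ u ∂μ, 0 ≤ u ∧ u ≤ 1) ∧
      ∀ k : ℕ, ∫ u, u ^ k ∂μ = k.factorial * Real.Gamma (l + 1) / Real.Gamma (k + l + 1) := by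
  rcases hl.eq_or_lt with rfl | hl
  · refine ⟨Measure.dirac 1, inferInstance, by simp, fun k => ?_⟩
    rw [integral_dirac, add_zero, zero_add, Real.Gamma_one, Real.Gamma_nat_eq_factorial]
    field_simp
    simp
  · have hnn : ∀ (k : ℕ) (u : ℝ), 0 ≤ ProbabilityTheory.betaPDFReal (k + 1) l u := fun k u => by
      by_cases h : 0 < u ∧ u < 1
      · exact (ProbabilityTheory.betaPDFReal_pos h.1 h.2 (by positivity) hl).le
      · rw [ProbabilityTheory.betaPDFReal, if_neg h]
    have hint : ∀ k : ℕ, ∫ u, ProbabilityTheory.betaPDFReal (k + 1) l u = 1 := fun k => by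
      rw [integral_eq_lintegral_of_nonneg_ae (Filter.Eventually.of_forall (hnn k))
        (ProbabilityTheory.stronglyMeasurable_betaPDFReal _ _).aestronglyMeasurable]
      have := ProbabilityTheory.lintegral_betaPDF_eq_one (α := k + 1) (β := l) (by positivity) hl
      simp only [ProbabilityTheory.betaPDF] at this
      rw [this, ENNReal.toReal_one]
    have hmeas : Measurable (ProbabilityTheory.betaPDF 1 l) :=
      (ProbabilityTheory.measurable_betaPDFReal 1 l).ennreal_ofReal
    refine ⟨ProbabilityTheory.betaMeasure 1 l,
      ProbabilityTheory.isProbabilityMeasureBeta one_pos hl, ?_, fun k => ?_⟩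
    · rw [ProbabilityTheory.betaMeasure, ae_withDensity_iff hmeas]
      refine Filter.Eventually.of_forall fun u hu => ?_
      by_contra h
      apply hu
      rw [ProbabilityTheory.betaPDF_eq, if_neg, ENNReal.ofReal_zero]
      exact fun h' => h ⟨h'.1.le, h'.2.le⟩
    · rw [ProbabilityTheory.betaMeasure, integral_withDensity_eq_integral_toReal_smul hmeas
        (Filter.Eventually.of_forall fun u => ENNReal.ofReal_lt_top)]
      have e : ∀ u, (ProbabilityTheory.betaPDF 1 l u).toReal • u ^ k =
          (ProbabilityTheory.beta (k + 1) l / ProbabilityTheory.beta 1 l) *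
            ProbabilityTheory.betaPDFReal (k + 1) l u := fun u => by
        have h0 := hnn 0 u
        rw [Nat.cast_zero, zero_add] at h0
        rw [ProbabilityTheory.betaPDF, ENNReal.toReal_ofReal h0, smul_eq_mul,
          ProbabilityTheory.betaPDFReal, ProbabilityTheory.betaPDFReal]
        have b0 := (ProbabilityTheory.beta_pos (α := k + 1) (by positivity) hl).ne'
        have b1 := (ProbabilityTheory.beta_pos (α := 1) (by positivity) hl).ne'
        split_ifs
        · rw [add_sub_cancel_right, Real.rpow_natCast, sub_self, Real.rpow_zero]
          field_simp
        · simp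
      simp_rw [e]
      rw [integral_const_mul, hint, mul_one, ProbabilityTheory.beta, ProbabilityTheory.beta,
        Real.Gamma_nat_eq_factorial, Real.Gamma_one, add_comm 1 l, add_right_comm (k : ℝ) 1 l]
      have g0 := (Real.Gamma_pos_of_pos hl).ne'
      have g1 := (Real.Gamma_pos_of_pos (by positivity : 0 < l + 1)).ne'
      have g2 := (Real.Gamma_pos_of_pos (by positivity : 0 < k + l + 1)).ne'
      field_simp

lemma besselTerm_neg_I_mul (w : ℝ) (m k : ℕ) :
    besselTerm (-Complex.I * w) m k = (-Complex.I) ^ m * (w : ℂ) ^ m *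
      ((-1) ^ k * (w : ℂ) ^ (2 * k) / (k.factorial * (k + m).factorial)) := by
  have h : (-Complex.I) ^ (2 * k) = (-1) ^ k := by rw [pow_mul, neg_sq, Complex.I_sq]
  rw [besselTerm, ← h]
  simp only [mul_pow]
  field_simp
  ring

lemma nbessel_add_nat (l v : ℝ) (hl : 0 ≤ l) (m : ℕ) :
    (-Complex.I) ^ m * ((v / 2 : ℝ) : ℂ) ^ m *
        ((Real.Gamma (l + 1) / Real.Gamma (l + 1 + m) : ℝ) : ℂ) * (nbessel (l + m) v : ℂ) =
      ∑' k : ℕ, besselTerm (-Complex.I * (v / 2 : ℝ)) m k *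
        (((k + m).factorial * Real.Gamma (l + 1) / Real.Gamma ((k + m : ℕ) + l + 1) : ℝ) : ℂ) := by
  rw [nbessel, Complex.ofReal_mul, Complex.ofReal_tsum, ← tsum_mul_left, ← tsum_mul_left]
  refine tsum_congr fun k => ?_
  have g1 : Real.Gamma (l + 1 + m) ≠ 0 := (Real.Gamma_pos_of_pos (by positivity)).ne'
  have g2 : Real.Gamma ((k + m : ℕ) + l + 1) ≠ 0 := (Real.Gamma_pos_of_pos (by positivity)).ne'
  have e1 : l + (m : ℝ) + 1 = l + 1 + m := by ring
  have e2 : (k : ℝ) + (l + m) + 1 = (k + m : ℕ) + l + 1 := by push_cast; ring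
  rw [besselTerm_neg_I_mul, e1, e2]
  have g1' : (Real.Gamma (l + 1 + m) : ℂ) ≠ 0 := by exact_mod_cast g1
  have g2' : (Real.Gamma ((k + m : ℕ) + l + 1) : ℂ) ≠ 0 := by exact_mod_cast g2
  have f1 : ((k + m).factorial : ℂ) ≠ 0 := by exact_mod_cast (k + m).factorial_ne_zero
  have f2 : (k.factorial : ℂ) ≠ 0 := by exact_mod_cast k.factorial_ne_zero
  simp only [Complex.ofReal_mul, Complex.ofReal_div, Complex.ofReal_pow, Complex.ofReal_neg,
    Complex.ofReal_one, Complex.ofReal_natCast]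
  field_simp

lemma besselTerm_mul_pow {u : ℝ} (hu : 0 ≤ u) (w : ℝ) (m k : ℕ) :
    besselTerm (-Complex.I * w) m k * (u : ℂ) ^ (k + m) =
      ((√u ^ m : ℝ) : ℂ) * besselTerm (-Complex.I * (w * √u : ℝ)) m k := by
  have h : (u : ℂ) = (√u : ℂ) ^ 2 := by exact_mod_cast (Real.sq_sqrt hu).symm
  rw [besselTerm_neg_I_mul, besselTerm_neg_I_mul, h]
  push_cast
  simp only [mul_pow]
  ring

lemma norm_moment_tsum_add_le (l w ε : ℝ) (hl : 0 ≤ l) (hε : |ε| ≤ 1) (m : ℕ) (hm : m ≠ 0) :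
    ‖(∑' k : ℕ, besselTerm (-Complex.I * w) 0 k *
        (((k + 0).factorial * Real.Gamma (l + 1) / Real.Gamma ((k + 0 : ℕ) + l + 1) : ℝ) : ℂ)) +
      ε * ∑' k : ℕ, besselTerm (-Complex.I * w) m k *
        (((k + m).factorial * Real.Gamma (l + 1) / Real.Gamma ((k + m : ℕ) + l + 1) : ℝ) : ℂ)‖
      ≤ 1 := by
  obtain ⟨μ, hμ, h01, hmom⟩ := exists_measure_moments l hl
  simp only [← hmom]
  set p : ℂ := -Complex.I * w with hp
  have hbd : ∀ n : ℕ, ∀ᵐ u ∂μ, ‖u ^ n‖ ≤ 1 := fun n => h01.mono fun u hu => by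
    rw [norm_pow, Real.norm_of_nonneg hu.1]; exact pow_le_one₀ hu.1 hu.2
  have hint : ∀ n : ℕ, Integrable (fun u : ℝ => u ^ n) μ := fun n =>
    Integrable.of_bound (by fun_prop) 1 (hbd n)
  have hsum : ∀ n : ℕ, HasSum
      (fun k : ℕ => besselTerm p n k * ((∫ u, u ^ (k + n) ∂μ : ℝ) : ℂ))
      (∫ u, ∑' k : ℕ, besselTerm p n k * ((u ^ (k + n) : ℝ) : ℂ) ∂μ) := fun n => by
    have := hasSum_integral_of_summable_integral_norm (μ := μ)
      (F := fun (k : ℕ) (u : ℝ) => besselTerm p n k * ((u ^ (k + n) : ℝ) : ℂ))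
      (fun k => ((hint _).ofReal (𝕜 := ℂ)).const_mul _)
      ((summable_norm_besselTerm p n).of_nonneg_of_le
        (fun k => integral_nonneg fun u => norm_nonneg _) fun k => by
          simp only [norm_mul, Complex.norm_real]
          rw [integral_const_mul]
          refine mul_le_of_le_one_right (norm_nonneg _) ?_
          have := integral_mono_ae (hint (k + n)).norm (integrable_const (1 : ℝ)) (hbd (k + n))
          simpa using this)
    simpa only [integral_const_mul, integral_complex_ofReal] using this
  have hI : ∀ n : ℕ, Integrable
      (fun u : ℝ => ∑' k : ℕ, besselTerm p n k * ((u ^ (k + n) : ℝ) : ℂ)) μ := fun n => by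
    refine Integrable.of_bound (Measurable.aestronglyMeasurable ?_)
      (∑' k, ‖besselTerm p n k‖) (h01.mono fun u hu => ?_)
    · exact Measurable.tsum fun k => by fun_prop
    · refine tsum_of_norm_bounded (summable_norm_besselTerm p n).hasSum fun k => ?_
      rw [norm_mul, Complex.norm_real]
      refine mul_le_of_le_one_right (norm_nonneg _) ?_
      rw [norm_pow, Real.norm_of_nonneg hu.1]
      exact pow_le_one₀ hu.1 hu.2
  rw [(hsum 0).tsum_eq, (hsum m).tsum_eq, ← integral_const_mul,
    ← integral_add (hI 0) ((hI m).const_mul _)]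
  refine (norm_integral_le_of_norm_le_const (C := 1) (h01.mono fun u hu => ?_)).trans (by simp)
  have hs := besselTerm_mul_pow hu.1 w
  simp only [Complex.ofReal_pow, hp, hs, tsum_mul_left]
  have hδ : |ε * √u ^ m| ≤ 1 := by
    rw [abs_mul, abs_of_nonneg (by positivity : 0 ≤ √u ^ m)]
    exact mul_le_one₀ hε (by positivity)
      (pow_le_one₀ (Real.sqrt_nonneg _) (Real.sqrt_le_one.2 hu.2))
  have := norm_besselTerm_tsum_add_le (w * √u) (ε * √u ^ m) hδ m hm
  simpa [mul_assoc] using this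

lemma norm_bker_le_one (a κ : ℝ) (ha0 : 0 < a) (R : ℕ) (hR : (R : ℝ) = 2 / a)
    (hκ : 1 / 2 ≤ κ) (x : ℝ) : ‖bker κ a x‖ ≤ 1 := by
  have hR0 : R ≠ 0 := by
    rintro rfl
    have : 0 < 2 / a := by positivity
    simp at hR; linarith
  have hl : 0 ≤ (2 * κ - 1) / a := div_nonneg (by linarith) ha0.le
  obtain ⟨ε, hε, hx⟩ : ∃ ε : ℝ, |ε| ≤ 1 ∧ x = ε * |x| := by
    rcases le_total 0 x with h | h
    · exact ⟨1, by simp, by rw [abs_of_nonneg h, one_mul]⟩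
    · exact ⟨-1, by simp, by rw [abs_of_nonpos h]; ring⟩
  set l := (2 * κ - 1) / a
  set v := 2 / a * |x| ^ (a / 2) with hv
  have hexp : Complex.exp (-(π / a) * Complex.I) = (-Complex.I) ^ R := by
    have hRc : (R : ℂ) = 2 / a := by exact_mod_cast hR
    have : (-(π / a) * Complex.I : ℂ) = R * (-(π / 2) * Complex.I) := by rw [hRc]; ring
    rw [this, Complex.exp_nat_mul, neg_mul, Complex.exp_neg, Complex.exp_pi_div_two_mul_I,
      Complex.inv_I]
  have hpow : a ^ (-(2 / a)) * |x| = (v / 2) ^ R := by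
    have h1 : v / 2 = a⁻¹ * |x| ^ (a / 2) := by rw [hv]; field_simp
    rw [h1, mul_pow, ← Real.rpow_natCast (|x| ^ (a / 2)), ← Real.rpow_mul (abs_nonneg x), hR,
      ← Real.rpow_natCast a⁻¹, hR, Real.inv_rpow ha0.le, Real.rpow_neg ha0.le]
    rw [show a / 2 * (2 / a) = 1 by field_simp, Real.rpow_one]
  have hb : bker κ a x = (∑' k : ℕ, besselTerm (-Complex.I * (v / 2 : ℝ)) 0 k *
        (((k + 0).factorial * Real.Gamma (l + 1) / Real.Gamma ((k + 0 : ℕ) + l + 1) : ℝ) : ℂ)) +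
      ε * ∑' k : ℕ, besselTerm (-Complex.I * (v / 2 : ℝ)) R k *
        (((k + R).factorial * Real.Gamma (l + 1) / Real.Gamma ((k + R : ℕ) + l + 1) : ℝ) : ℂ) := by
    rw [← nbessel_add_nat l v hl 0, ← nbessel_add_nat l v hl R, ← Complex.ofReal_pow _ R, ← hpow,
      ← hexp, bker]
    have g : Real.Gamma (l + 1) ≠ 0 := (Real.Gamma_pos_of_pos (by positivity)).ne'
    have hx' : (x : ℂ) = ε * (|x| : ℝ) := by exact_mod_cast hx
    rw [hx', hR]
    simp only [Nat.cast_zero, add_zero, pow_zero, div_self g, Complex.ofReal_one, one_mul,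
      Complex.ofReal_mul]
    ring
  rw [hb]
  exact norm_moment_tsum_add_le l (v / 2) ε hl hε R hR0

lemma nbessel_zero (l : ℝ) (hl : 0 ≤ l) : nbessel l 0 = 1 := by
  have g : Real.Gamma (l + 1) ≠ 0 := (Real.Gamma_pos_of_pos (by positivity)).ne'
  rw [nbessel, tsum_eq_single 0]
  · simp [g]
  · intro k hk
    simp [hk]

lemma bker_zero (a κ : ℝ) (ha0 : 0 < a) (hκ : 1 / 2 ≤ κ) : bker κ a 0 = 1 := by
  have h : (2 / a) * |(0 : ℝ)| ^ (a / 2) = 0 := by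
    rw [abs_zero, Real.zero_rpow (by positivity), mul_zero]
  rw [bker, h, nbessel_zero _ (div_nonneg (by linarith) ha0.le)]
  simp

/-- for 0 < a ≤ 1 with 2/a a natural number and κ ≥ 1/2, the kernel
satisfies |b| ≤ 1 everywhere, b(0) = 1, and the sup of |b| equals 1. -/
theorem stmt0 (a κ : ℝ) (ha0 : 0 < a) (ha1 : a ≤ 1)
    (haN : ∃ R : ℕ, (R : ℝ) = 2 / a) (hκ : 1 / 2 ≤ κ) :
    (∀ x : ℝ, ‖bker κ a x‖ ≤ 1) ∧ bker κ a 0 = 1 ∧ (⨆ x : ℝ, ‖bker κ a x‖) = 1 := by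
  obtain ⟨R, hR⟩ := haN
  have hle := norm_bker_le_one a κ ha0 R hR hκ
  have h0 := bker_zero a κ ha0 hκ
  refine ⟨hle, h0, le_antisymm (ciSup_le hle) ?_⟩
  have := le_ciSup (f := fun x => ‖bker κ a x‖) ⟨1, by rintro _ ⟨x, rfl⟩; exact hle x⟩ 0
  simpa [h0] using this
end

section
/- Let a > 0 and κ ≥ 0 with 2κ + a > 1. The function b_{κ,a} is bounded on ℝ if and only if either (0 < a ≤ 2 and κ ≥ 1/2 − a/4) or (a ≥ 2 and κ ≥ 0). -/
open Real MeasureTheory Finset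

/-- The entire function `∑ (-1)^k t^k / (k! Γ(k + s))`. -/
noncomputable def besselClifford (s t : ℝ) : ℝ :=
  ∑' k : ℕ, (-1 : ℝ) ^ k / (Nat.factorial k * Real.Gamma (k + s)) * t ^ k

theorem nbessel_eq_besselClifford (l v : ℝ) :
    nbessel l v = Real.Gamma (l + 1) * besselClifford (l + 1) ((v / 2) ^ 2) := by
  simp only [nbessel, besselClifford, pow_mul, add_assoc]

theorem exists_pos_le_Gamma_nat_add {s : ℝ} (hs : 0 < s) :
    ∃ m : ℝ, 0 < m ∧ ∀ k : ℕ, m ≤ Real.Gamma (k + s) := by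
  refine ⟨min (Real.Gamma s) (Real.Gamma (s + 1)),
    lt_min (Real.Gamma_pos_of_pos hs) (Real.Gamma_pos_of_pos (by linarith)), fun k => ?_⟩
  rcases k with _ | k
  · simp
  induction k with
  | zero => simp [add_comm 1 s]
  | succ k ih =>
    refine ih.trans ?_
    have hpos : 0 < ((k + 1 : ℕ) : ℝ) + s := by positivity
    have hΓ := Real.Gamma_pos_of_pos hpos
    have h1 : ((k + 1 + 1 : ℕ) : ℝ) + s = ((k + 1 : ℕ) : ℝ) + s + 1 := by push_cast; ring
    rw [h1, Real.Gamma_add_one hpos.ne']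
    have h2 : (1 : ℝ) ≤ ((k + 1 : ℕ) : ℝ) + s := by
      push_cast
      have : (0 : ℝ) ≤ k := by positivity
      linarith
    nlinarith

theorem exists_abs_besselClifford_coeff_le {s : ℝ} (hs : 0 < s) :
    ∃ B : ℝ, 0 < B ∧ ∀ k : ℕ,
      |(-1 : ℝ) ^ k / (Nat.factorial k * Real.Gamma (k + s))| ≤ B / Nat.factorial k := by
  obtain ⟨m, hm, h⟩ := exists_pos_le_Gamma_nat_add hs
  refine ⟨1 / m, by positivity, fun k => ?_⟩
  have hf : (0 : ℝ) < Nat.factorial k := by positivity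
  have hΓ : 0 < Real.Gamma (k + s) := hm.trans_le (h k)
  rw [abs_div, abs_pow, abs_neg, abs_one, one_pow, abs_of_pos (by positivity), div_div, mul_comm m]
  gcongr
  exact h k

theorem summable_besselClifford {s : ℝ} (hs : 0 < s) (t : ℝ) :
    Summable fun k : ℕ => (-1 : ℝ) ^ k / (Nat.factorial k * Real.Gamma (k + s)) * t ^ k := by
  obtain ⟨B, hB, h⟩ := exists_abs_besselClifford_coeff_le hs
  refine Summable.of_norm_bounded ((Real.summable_pow_div_factorial |t|).mul_left B) fun k => ?_
  rw [Real.norm_eq_abs, abs_mul, abs_pow]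
  calc _ ≤ B / Nat.factorial k * |t| ^ k := by gcongr; exact h k
    _ = _ := by ring

theorem hasDerivAt_besselClifford {s : ℝ} (hs : 0 < s) (t : ℝ) :
    HasDerivAt (besselClifford s) (-besselClifford (s + 1) t) t := by
  obtain ⟨B, hB, h⟩ := exists_abs_besselClifford_coeff_le hs
  set c : ℕ → ℝ := fun k => (-1 : ℝ) ^ k / (Nat.factorial k * Real.Gamma (k + s)) with hc
  set R : ℝ := |t| + 1 with hR
  have hsum : Summable fun k : ℕ => B / Nat.factorial k * (k * R ^ (k - 1)) := by
    rw [← summable_nat_add_iff 1]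
    refine ((Real.summable_pow_div_factorial R).mul_left B).congr fun k => ?_
    have hf : (Nat.factorial k : ℝ) ≠ 0 := by positivity
    have hk : (k : ℝ) + 1 ≠ 0 := by positivity
    rw [Nat.factorial_succ]
    push_cast
    field_simp
  have hbound : ∀ (k : ℕ) (y : ℝ), y ∈ Metric.ball (0 : ℝ) R →
      ‖c k * (k * y ^ (k - 1))‖ ≤ B / Nat.factorial k * (k * R ^ (k - 1)) := by
    intro k y hy
    have hy' : |y| ≤ R := by simpa using (mem_ball_zero_iff.1 hy).le
    rw [Real.norm_eq_abs, abs_mul, abs_mul, abs_pow, Nat.abs_cast]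
    gcongr
    exact h k
  have ht : t ∈ Metric.ball (0 : ℝ) R := by simp [hR]
  have hd := hasDerivAt_tsum_of_isPreconnected hsum Metric.isOpen_ball
    (convex_ball (0 : ℝ) R).isPreconnected
    (fun k y _ => (hasDerivAt_pow k y).const_mul (c k)) hbound ht
    (summable_besselClifford hs t) ht
  have hval : ∑' k : ℕ, c k * (k * t ^ (k - 1)) = -besselClifford (s + 1) t := by
    rw [(Summable.of_norm_bounded hsum fun k => hbound k t ht).tsum_eq_zero_add]
    simp only [besselClifford, Nat.cast_zero, zero_mul, mul_zero, zero_add, ← tsum_neg]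
    refine tsum_congr fun k => ?_
    have hf : (Nat.factorial k : ℝ) ≠ 0 := by positivity
    have hk : (k : ℝ) + 1 ≠ 0 := by positivity
    have hΓ : Real.Gamma (k + (s + 1)) ≠ 0 := (Real.Gamma_pos_of_pos (by positivity)).ne'
    have he : ((k + 1 : ℕ) : ℝ) + s = k + (s + 1) := by push_cast; ring
    simp only [hc, he, Nat.factorial_succ, Nat.add_sub_cancel]
    push_cast
    field_simp
    ring
  rw [hval] at hd
  exact hd

theorem besselClifford_recurrence {s : ℝ} (hs : 0 < s) (t : ℝ) :
    besselClifford s t = s * besselClifford (s + 1) t - t * besselClifford (s + 2) t := by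
  have h1 := summable_besselClifford (s := s + 1) (by linarith) t
  have h2 := summable_besselClifford (s := s + 2) (by linarith) t
  have key : ∀ k : ℕ, (-1 : ℝ) ^ k / (Nat.factorial k * Real.Gamma (k + s)) * t ^ k =
      s * ((-1 : ℝ) ^ k / (Nat.factorial k * Real.Gamma (k + (s + 1))) * t ^ k) +
      k * ((-1 : ℝ) ^ k / (Nat.factorial k * Real.Gamma (k + (s + 1))) * t ^ k) := by
    intro k
    have hk : (k : ℝ) + s ≠ 0 := by positivity
    have hΓ : Real.Gamma (k + s) ≠ 0 := (Real.Gamma_pos_of_pos (by positivity)).ne'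
    have hf : (Nat.factorial k : ℝ) ≠ 0 := by positivity
    rw [← add_assoc, Real.Gamma_add_one hk]
    field_simp
    ring
  have hshift : ∀ k : ℕ, ((k + 1 : ℕ) : ℝ) *
      ((-1 : ℝ) ^ (k + 1) / (Nat.factorial (k + 1) * Real.Gamma ((k + 1 : ℕ) + (s + 1))) *
        t ^ (k + 1)) =
      -t * ((-1 : ℝ) ^ k / (Nat.factorial k * Real.Gamma (k + (s + 2))) * t ^ k) := by
    intro k
    have hk : (k : ℝ) + 1 ≠ 0 := by positivity
    have hf : (Nat.factorial k : ℝ) ≠ 0 := by positivity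
    have hΓ : Real.Gamma (k + (s + 2)) ≠ 0 := (Real.Gamma_pos_of_pos (by positivity)).ne'
    have he : ((k + 1 : ℕ) : ℝ) + (s + 1) = k + (s + 2) := by push_cast; ring
    rw [he, Nat.factorial_succ]
    push_cast
    field_simp
    ring
  have h3 : Summable fun k : ℕ =>
      k * ((-1 : ℝ) ^ k / (Nat.factorial k * Real.Gamma (k + (s + 1))) * t ^ k) := by
    rw [← summable_nat_add_iff 1]
    exact (h2.mul_left (-t)).congr fun k => (hshift k).symm
  rw [besselClifford, tsum_congr key, (h1.mul_left s).tsum_add h3, tsum_mul_left,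
    h3.tsum_eq_zero_add, tsum_congr hshift, tsum_mul_left]
  simp only [besselClifford, Nat.cast_zero]
  ring

theorem besselClifford_zero (s : ℝ) : besselClifford s 0 = 1 / Real.Gamma s := by
  rw [besselClifford, tsum_eq_single 0]
  · simp
  · intro k hk
    simp [hk]

theorem continuous_besselClifford {s : ℝ} (hs : 0 < s) : Continuous (besselClifford s) :=
  continuous_iff_continuousAt.2 fun t => (hasDerivAt_besselClifford hs t).continuousAt

/-- The Liouville normal form `v ^ (l + 1/2) F(v² / 4)` of the Bessel function. -/
noncomputable def besselLiouville (l v : ℝ) : ℝ :=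
  v ^ (l + 1 / 2) * besselClifford (l + 1) ((v / 2) ^ 2)

/-- The derivative of `besselLiouville`. -/
noncomputable def besselLiouvilleDeriv (l v : ℝ) : ℝ :=
  (l + 1 / 2) * v ^ (l - 1 / 2) * besselClifford (l + 1) ((v / 2) ^ 2)
    - v ^ (l + 3 / 2) / 2 * besselClifford (l + 2) ((v / 2) ^ 2)

theorem hasDerivAt_besselClifford_sq {s : ℝ} (hs : 0 < s) (v : ℝ) :
    HasDerivAt (fun v => besselClifford s ((v / 2) ^ 2))
      (-(v / 2) * besselClifford (s + 1) ((v / 2) ^ 2)) v := by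
  have h := (hasDerivAt_besselClifford hs ((v / 2) ^ 2)).comp v
    (((hasDerivAt_id v).div_const 2).pow 2)
  refine h.congr_deriv ?_
  simp
  ring

theorem hasDerivAt_besselLiouville {l v : ℝ} (hl : -1 < l) (hv : 0 < v) :
    HasDerivAt (besselLiouville l) (besselLiouvilleDeriv l v) v := by
  have h := (Real.hasDerivAt_rpow_const (p := l + 1 / 2) (Or.inl hv.ne')).mul
    (hasDerivAt_besselClifford_sq (s := l + 1) (by linarith) v)
  refine h.congr_deriv ?_
  have e1 : v ^ (l + 3 / 2) = v ^ (l + 1 / 2) * v := by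
    rw [← Real.rpow_add_one hv.ne']; ring_nf
  rw [besselLiouvilleDeriv, e1, show l + 1 / 2 - 1 = l - 1 / 2 by ring,
    show l + 1 + 1 = l + 2 by ring]
  ring

theorem hasDerivAt_besselLiouvilleDeriv {l v : ℝ} (hl : -1 < l) (hv : 0 < v) :
    HasDerivAt (besselLiouvilleDeriv l)
      (((l ^ 2 - 1 / 4) / v ^ 2 - 1) * besselLiouville l v) v := by
  have h1 := ((Real.hasDerivAt_rpow_const (p := l - 1 / 2) (Or.inl hv.ne')).const_mul
    (l + 1 / 2)).mul (hasDerivAt_besselClifford_sq (s := l + 1) (by linarith) v)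
  have h2 := ((Real.hasDerivAt_rpow_const (p := l + 3 / 2) (Or.inl hv.ne')).div_const 2).mul
    (hasDerivAt_besselClifford_sq (s := l + 2) (by linarith) v)
  refine (h1.sub h2).congr_deriv ?_
  have hr := besselClifford_recurrence (s := l + 1) (by linarith) ((v / 2) ^ 2)
  have e0 : v ^ (l - 1 / 2) = v ^ (l - 3 / 2) * v := by
    rw [← Real.rpow_add_one hv.ne']; ring_nf
  have e1 : v ^ (l + 1 / 2) = v ^ (l - 3 / 2) * v * v := by
    rw [← Real.rpow_add_one hv.ne', ← Real.rpow_add_one hv.ne']; ring_nf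
  have e2 : v ^ (l + 3 / 2) = v ^ (l - 3 / 2) * v * v * v := by
    rw [← Real.rpow_add_one hv.ne', ← Real.rpow_add_one hv.ne', ← Real.rpow_add_one hv.ne']
    ring_nf
  rw [show l + 1 + 1 = l + 2 by ring, show l + 1 + 2 = l + 3 by ring] at hr
  rw [besselLiouville, show l - 1 / 2 - 1 = l - 3 / 2 by ring,
    show l + 3 / 2 - 1 = l + 1 / 2 by ring, show l + 1 + 1 = l + 2 by ring,
    show l + 2 + 1 = l + 3 by ring, e0, e2, e1, hr]
  field_simp
  ring

section Energy

variable {w p : ℝ → ℝ} {c : ℝ}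

theorem hasDerivAt_energy_mul_exp
    (hw : ∀ v, 0 < v → HasDerivAt w (p v) v)
    (hp : ∀ v, 0 < v → HasDerivAt p ((c / v ^ 2 - 1) * w v) v) (d : ℝ) {v : ℝ} (hv : 0 < v) :
    HasDerivAt (fun v => (w v ^ 2 + p v ^ 2) * Real.exp (d / v))
      ((2 * c * (w v * p v) - d * (w v ^ 2 + p v ^ 2)) / v ^ 2 * Real.exp (d / v)) v := by
  have h1 := ((hw v hv).pow 2).add ((hp v hv).pow 2)
  have h2 := ((hasDerivAt_inv hv.ne').const_mul d).exp
  refine (h1.mul h2).congr_deriv ?_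
  simp only [Pi.add_apply, Pi.pow_apply, div_eq_mul_inv]
  push_cast
  field_simp
  ring

theorem antitoneOn_energy_mul_exp
    (hw : ∀ v, 0 < v → HasDerivAt w (p v) v)
    (hp : ∀ v, 0 < v → HasDerivAt p ((c / v ^ 2 - 1) * w v) v) :
    AntitoneOn (fun v => (w v ^ 2 + p v ^ 2) * Real.exp (|c| / v)) (Set.Ioi 0) := by
  refine antitoneOn_of_hasDerivWithinAt_nonpos (convex_Ioi 0)
    (fun v hv => (hasDerivAt_energy_mul_exp hw hp |c| hv).continuousAt.continuousWithinAt)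
    (fun v hv => (hasDerivAt_energy_mul_exp hw hp |c|
      (by simpa using hv)).hasDerivWithinAt) fun v _ => ?_
  refine mul_nonpos_of_nonpos_of_nonneg (div_nonpos_of_nonpos_of_nonneg ?_ (sq_nonneg v))
    (Real.exp_pos _).le
  nlinarith [mul_nonneg (sub_nonneg.2 (le_abs_self c)) (sq_nonneg (w v + p v)),
    mul_nonneg (neg_le_iff_add_nonneg.1 (neg_abs_le c)) (sq_nonneg (w v - p v))]

theorem monotoneOn_energy_mul_exp
    (hw : ∀ v, 0 < v → HasDerivAt w (p v) v)
    (hp : ∀ v, 0 < v → HasDerivAt p ((c / v ^ 2 - 1) * w v) v) :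
    MonotoneOn (fun v => (w v ^ 2 + p v ^ 2) * Real.exp (-|c| / v)) (Set.Ioi 0) := by
  refine monotoneOn_of_hasDerivWithinAt_nonneg (convex_Ioi 0)
    (fun v hv => (hasDerivAt_energy_mul_exp hw hp (-|c|) hv).continuousAt.continuousWithinAt)
    (fun v hv => (hasDerivAt_energy_mul_exp hw hp (-|c|)
      (by simpa using hv)).hasDerivWithinAt) fun v _ => ?_
  refine mul_nonneg (div_nonneg ?_ (sq_nonneg v)) (Real.exp_pos _).le
  nlinarith [mul_nonneg (sub_nonneg.2 (le_abs_self c)) (sq_nonneg (w v - p v)),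
    mul_nonneg (neg_le_iff_add_nonneg.1 (neg_abs_le c)) (sq_nonneg (w v + p v))]

end Energy

theorem exists_abs_besselLiouville_le {l : ℝ} (hl : -1 < l) :
    ∃ C : ℝ, ∀ v, 1 ≤ v → |besselLiouville l v| ≤ C := by
  have hanti := antitoneOn_energy_mul_exp (fun v hv => hasDerivAt_besselLiouville hl hv)
    (fun v hv => hasDerivAt_besselLiouvilleDeriv hl hv)
  refine ⟨_, fun v hv => Real.abs_le_sqrt (le_trans ?_
    (hanti (Set.mem_Ioi.2 one_pos) (Set.mem_Ioi.2 (by linarith)) hv))⟩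
  have hexp : 1 ≤ Real.exp (|l ^ 2 - 1 / 4| / v) := Real.one_le_exp (by positivity)
  have := sq_nonneg (besselLiouville l v)
  have := sq_nonneg (besselLiouvilleDeriv l v)
  simp only
  nlinarith

theorem exists_pos_le_besselLiouville_energy {l : ℝ} (hl : -1 < l) :
    ∃ δ : ℝ, 0 < δ ∧ ∀ v, 1 ≤ v →
      δ ≤ besselLiouville l v ^ 2 + besselLiouvilleDeriv l v ^ 2 := by
  have hmono := monotoneOn_energy_mul_exp (fun v hv => hasDerivAt_besselLiouville hl hv)
    (fun v hv => hasDerivAt_besselLiouvilleDeriv hl hv)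
  have hcont : Continuous fun v : ℝ => besselClifford (l + 1) ((v / 2) ^ 2) :=
    (continuous_besselClifford (by linarith)).comp (by fun_prop)
  have h0 : besselClifford (l + 1) ((0 / 2) ^ 2) ≠ 0 := by
    have := Real.Gamma_pos_of_pos (show 0 < l + 1 by linarith)
    rw [zero_div, zero_pow two_ne_zero, besselClifford_zero]
    positivity
  obtain ⟨ε, hε, hne⟩ := Metric.eventually_nhds_iff.1
    (hcont.continuousAt.eventually_ne (x := 0) h0)
  set r : ℝ := min (ε / 2) 1 with hr
  have hr0 : 0 < r := lt_min (by linarith) one_pos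
  have hwr : besselLiouville l r ≠ 0 := by
    refine mul_ne_zero (Real.rpow_pos_of_pos hr0 _).ne' (hne ?_)
    rw [Real.dist_eq, sub_zero, abs_of_pos hr0]
    exact (min_le_left _ _).trans_lt (by linarith)
  refine ⟨_, ?_, fun v hv => (hmono hr0 (Set.mem_Ioi.2 (by linarith))
    ((min_le_right _ _).trans hv)).trans ?_⟩
  · have := sq_nonneg (besselLiouvilleDeriv l r)
    have := Real.exp_pos (-|l ^ 2 - 1 / 4| / r)
    positivity
  · refine mul_le_of_le_one_right (by positivity) (Real.exp_le_one_iff.2 ?_)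
    exact div_nonpos_of_nonpos_of_nonneg (by simp) (by linarith)

theorem exists_rpow_mul_abs_nbessel_le {l r : ℝ} (hl : -1 < l) (hr : 0 ≤ r)
    (hrl : r ≤ l + 1 / 2) :
    ∃ C : ℝ, ∀ v, 0 ≤ v → v ^ r * |nbessel l v| ≤ C := by
  obtain ⟨C₁, h₁⟩ := exists_abs_besselLiouville_le hl
  have hcont : Continuous (nbessel l) := by
    simp only [funext (nbessel_eq_besselClifford l)]
    exact continuous_const.mul ((continuous_besselClifford (by linarith)).comp (by fun_prop))
  obtain ⟨C₂, h₂⟩ := (isCompact_Icc (a := (0 : ℝ)) (b := 1)).exists_bound_of_continuousOn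
    hcont.continuousOn
  have hΓ := Real.Gamma_pos_of_pos (show 0 < l + 1 by linarith)
  refine ⟨max (Real.Gamma (l + 1) * C₁) C₂, fun v hv => ?_⟩
  rcases le_total v 1 with hv1 | hv1
  · refine le_max_of_le_right (le_trans ?_ (h₂ v ⟨hv, hv1⟩))
    exact mul_le_of_le_one_left (abs_nonneg _) (Real.rpow_le_one hv hv1 hr)
  · refine le_max_of_le_left ?_
    have h := h₁ v hv1
    have hv0 : 0 < v := by linarith
    rw [besselLiouville, abs_mul, abs_of_pos (Real.rpow_pos_of_pos hv0 _)] at h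
    rw [nbessel_eq_besselClifford, abs_mul, abs_of_pos hΓ, mul_left_comm]
    gcongr
    refine le_trans ?_ h
    gcongr

theorem not_bounded_nbessel {l : ℝ} (hl : -1 < l) (hl' : l < -1 / 2) (M : ℝ) :
    ¬ ∀ v, 0 < v → |nbessel l v| ≤ M := by
  intro hM
  obtain ⟨δ, hδ, hE⟩ := exists_pos_le_besselLiouville_energy hl
  have hΓ := Real.Gamma_pos_of_pos (show 0 < l + 1 by linarith)
  have hlim : Filter.Tendsto (besselLiouville l) Filter.atTop (nhds 0) := by
    have ht : Filter.Tendsto (fun v : ℝ => v ^ (l + 1 / 2) * (M / Real.Gamma (l + 1)))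
        Filter.atTop (nhds 0) := by
      have := tendsto_rpow_neg_atTop (y := -(l + 1 / 2)) (by linarith)
      simpa using this.mul_const (M / Real.Gamma (l + 1))
    refine squeeze_zero_norm' ?_ ht
    filter_upwards [Filter.eventually_gt_atTop 0] with v hv
    have h := hM v hv
    rw [nbessel_eq_besselClifford, abs_mul, abs_of_pos hΓ, mul_comm, ← le_div_iff₀ hΓ] at h
    rw [besselLiouville, Real.norm_eq_abs, abs_mul, abs_of_pos (Real.rpow_pos_of_pos hv _)]
    gcongr
  set η : ℝ := Real.sqrt (δ / 8) with hη
  have hη0 : 0 < η := Real.sqrt_pos.2 (by linarith)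
  have hη2 : η ^ 2 = δ / 8 := Real.sq_sqrt (by linarith)
  obtain ⟨N, hN⟩ := Filter.eventually_atTop.1 (Metric.tendsto_nhds.1 hlim η hη0)
  set V : ℝ := max N 1 with hV
  have hsmall : ∀ v, V ≤ v → |besselLiouville l v| < η := fun v hv => by
    simpa using hN v ((le_max_left _ _).trans hv)
  have hV1 : 1 ≤ V := le_max_right _ _
  obtain ⟨ξ, hξ, hslope⟩ := exists_hasDerivAt_eq_slope (besselLiouville l)
    (besselLiouvilleDeriv l) (show V < V + 1 by linarith)
    (fun v hv => (hasDerivAt_besselLiouville hl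
      (by linarith [hv.1])).continuousAt.continuousWithinAt)
    (fun v hv => hasDerivAt_besselLiouville hl (by linarith [hv.1]))
  rw [add_sub_cancel_left, div_one] at hslope
  have hξV := hξ.1
  have h1 := abs_lt.1 (hsmall V le_rfl)
  have h2 := abs_lt.1 (hsmall (V + 1) (by linarith))
  have h3 := abs_lt.1 (hsmall ξ hξV.le)
  have h4 := hE ξ (by linarith)
  have h5 : besselLiouvilleDeriv l ξ ^ 2 ≤ (2 * η) ^ 2 :=
    sq_le_sq' (by linarith) (by linarith)
  have h6 : besselLiouville l ξ ^ 2 ≤ η ^ 2 := sq_le_sq' (by linarith) (by linarith)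
  nlinarith

theorem bker_add_bker_neg (κ a x : ℝ) :
    bker κ a x + bker κ a (-x) =
      2 * (nbessel ((2 * κ - 1) / a) ((2 / a) * |x| ^ (a / 2)) : ℂ) := by
  simp only [bker, abs_neg]
  push_cast
  ring

theorem exists_norm_bker_le {a κ : ℝ} (ha : 0 < a) (hκ : 1 / 2 - a / 4 ≤ κ)
    (h : 1 < 2 * κ + a) : ∃ M : ℝ, ∀ x : ℝ, ‖bker κ a x‖ ≤ M := by
  set l : ℝ := (2 * κ - 1) / a with hl
  have hl1 : -1 < l := by rw [hl, lt_div_iff₀ ha]; linarith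
  have hl2 : 0 ≤ l + 1 / 2 := by
    have : -1 / 2 ≤ l := by rw [hl, le_div_iff₀ ha]; linarith
    linarith
  have ha2 : 0 < 2 / a := by positivity
  obtain ⟨C₁, h₁⟩ := exists_rpow_mul_abs_nbessel_le hl1 le_rfl hl2
  obtain ⟨C₂, h₂⟩ := exists_rpow_mul_abs_nbessel_le (l := l + 2 / a) (r := 2 / a)
    (by linarith) ha2.le (by linarith)
  set K : ℝ := ‖Complex.exp (-(Real.pi / a) * Complex.I) * ((a ^ (-(2 / a)) : ℝ) : ℂ)
      * ((Real.Gamma (l + 1) / Real.Gamma (l + 1 + 2 / a) : ℝ) : ℂ)‖ with hK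
  refine ⟨C₁ + K * ((a / 2) ^ (2 / a) * C₂), fun x => ?_⟩
  set v : ℝ := (2 / a) * |x| ^ (a / 2) with hv
  have hv0 : 0 ≤ v := by positivity
  have hx : |x| = (a / 2) ^ (2 / a) * v ^ (2 / a) := by
    rw [← Real.mul_rpow (by positivity) hv0, hv, ← mul_assoc,
      show a / 2 * (2 / a) = 1 by field_simp, one_mul, ← Real.rpow_mul (abs_nonneg x),
      show a / 2 * (2 / a) = 1 by field_simp, Real.rpow_one]
  have hb₁ := h₁ v hv0
  have hb₂ := h₂ v hv0
  rw [Real.rpow_zero, one_mul] at hb₁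
  rw [bker]
  refine (norm_add_le _ _).trans (add_le_add (by simpa using hb₁) ?_)
  rw [← hl, ← hv, mul_assoc, norm_mul, ← hK, norm_mul, Complex.norm_real, Complex.norm_real,
    Real.norm_eq_abs, Real.norm_eq_abs, hx, mul_assoc ((a / 2) ^ (2 / a))]
  gcongr

theorem half_sub_le_of_norm_bker_le {a κ : ℝ} (ha : 0 < a) (h : 1 < 2 * κ + a) {M : ℝ}
    (hM : ∀ x : ℝ, ‖bker κ a x‖ ≤ M) : 1 / 2 - a / 4 ≤ κ := by
  by_contra! hκ
  have hl1 : -1 < (2 * κ - 1) / a := by rw [lt_div_iff₀ ha]; linarith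
  have hl2 : (2 * κ - 1) / a < -1 / 2 := by rw [div_lt_iff₀ ha]; linarith
  refine not_bounded_nbessel hl1 hl2 M fun v hv => ?_
  have hx : (2 / a) * |(a / 2 * v) ^ (2 / a)| ^ (a / 2) = v := by
    rw [abs_of_nonneg (by positivity), ← Real.rpow_mul (by positivity),
      show 2 / a * (a / 2) = 1 by field_simp, Real.rpow_one]
    field_simp
  have hadd := bker_add_bker_neg κ a ((a / 2 * v) ^ (2 / a))
  rw [hx] at hadd
  have hn := norm_add_le (bker κ a ((a / 2 * v) ^ (2 / a))) (bker κ a (-(a / 2 * v) ^ (2 / a)))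
  rw [hadd, norm_mul, Complex.norm_real, Real.norm_eq_abs, Complex.norm_ofNat] at hn
  linarith [hM ((a / 2 * v) ^ (2 / a)), hM (-(a / 2 * v) ^ (2 / a))]

/-- criterion for the boundedness of the kernel. -/
theorem stmt3 (a κ : ℝ) (ha : 0 < a) (hκ : 0 ≤ κ) (h : 1 < 2 * κ + a) :
    (∃ M : ℝ, ∀ x : ℝ, ‖bker κ a x‖ ≤ M) ↔
      ((0 < a ∧ a ≤ 2 ∧ 1 / 2 - a / 4 ≤ κ) ∨ (2 ≤ a ∧ 0 ≤ κ)) := by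
  constructor
  · rintro ⟨M, hM⟩
    have hle := half_sub_le_of_norm_bker_le ha h hM
    rcases le_total a 2 with ha2 | ha2
    · exact Or.inl ⟨ha, ha2, hle⟩
    · exact Or.inr ⟨ha2, hκ⟩
  · rintro (⟨-, -, hle⟩ | ⟨ha2, -⟩)
    · exact exists_norm_bker_le ha hle h
    · exact exists_norm_bker_le ha (by linarith) h
end

section
/- For every integer r ≥ 0, every real λ > −1/2 and every v ∈ ℝ, one has e_{2r+1}(v,λ) = c_λ ∫_{−1}^{1} (1−t²)^{λ−1/2} q_{2r+1}(t,λ) e^{−ivt} dt, where q_{2r+1}(t,λ) = 1 + t · Σ_{s=0}^{r} (−1)^s · binom(r,s) · ((λ+r+1)_s/(λ+1/2)_s) · (1−t²)^s. -/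
open Real MeasureTheory Finset

/-- Pochhammer symbol (z)_n = z(z+1)...(z+n-1), with (z)_0 = 1. -/
noncomputable def poch (z : ℝ) (n : ℕ) : ℝ := ∏ i ∈ Finset.range n, (z + i)

/-- The constant c_lambda = Gamma(lambda+1)/(sqrt(pi) Gamma(lambda+1/2)). -/
noncomputable def cgeg (l : ℝ) : ℝ :=
  Real.Gamma (l + 1) / (Real.sqrt Real.pi * Real.Gamma (l + 1 / 2))

/-- The function e_{2r+1}(v, lambda). -/
noncomputable def e2r1 (r : ℕ) (l : ℝ) (v : ℝ) : ℂ :=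
  (nbessel l v : ℂ) + Complex.I * (-1 : ℂ) ^ (r + 1) *
    ((v ^ (2 * r + 1) / (2 ^ (2 * r + 1) * poch (l + 1) (2 * r + 1)) : ℝ) : ℂ) *
    (nbessel (l + (2 * r + 1)) v : ℂ)

/-- The polynomial q_{2r+1}(t, lambda). -/
noncomputable def qOdd (r : ℕ) (l : ℝ) (t : ℝ) : ℝ :=
  1 + t * ∑ s ∈ Finset.range (r + 1), (-1 : ℝ) ^ s * (r.choose s : ℝ) *
    (poch (l + r + 1) s / poch (l + 1 / 2) s) * (1 - t ^ 2) ^ s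

lemma poch_zero (z : ℝ) : poch z 0 = 1 := by simp [poch]

lemma poch_succ (z : ℝ) (n : ℕ) : poch z (n + 1) = poch z n * (z + n) := by
  simp [poch, Finset.prod_range_succ]

lemma poch_succ_left (z : ℝ) (n : ℕ) : poch z (n + 1) = z * poch (z + 1) n := by
  simp only [poch, Finset.prod_range_succ']
  rw [mul_comm]
  simp only [Nat.cast_zero, add_zero, Nat.cast_add, Nat.cast_one, add_assoc, add_comm (1 : ℝ)]

lemma poch_pos {z : ℝ} (hz : 0 < z) (n : ℕ) : 0 < poch z n :=
  Finset.prod_pos fun _ _ => by positivity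

lemma Gamma_add_natCast {z : ℝ} (hz : 0 < z) (n : ℕ) :
    Real.Gamma (z + n) = poch z n * Real.Gamma z := by
  induction n with
  | zero => simp [poch_zero]
  | succ n ih =>
    rw [Nat.cast_succ, ← add_assoc, Real.Gamma_add_one (by positivity), ih, poch_succ]
    ring

lemma poch_natCast_add_one_mul_factorial (m n : ℕ) :
    poch ((m : ℝ) + 1) n * (Nat.factorial m : ℝ) = (Nat.factorial (m + n) : ℝ) := by
  rw [← Real.Gamma_nat_eq_factorial, ← Real.Gamma_nat_eq_factorial, ← Gamma_add_natCast (by positivity)]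
  push_cast
  ring_nf

lemma poch_eq_zero_of_lt {k r : ℕ} (h : k < r) : poch ((k : ℝ) + 1 - r) r = 0 := by
  refine Finset.prod_eq_zero (i := r - 1 - k) (by simp; lia) ?_
  rw [Nat.cast_sub (by lia), Nat.cast_sub (by lia)]
  push_cast
  ring

/-- The Chu–Vandermonde identity for a terminating `₂F₁` at `1`. -/
lemma sum_choose_mul_poch_div_poch (n : ℕ) (b c : ℝ) (hc : 0 < c) :
    ∑ s ∈ Finset.range (n + 1), (-1 : ℝ) ^ s * (n.choose s : ℝ) * (poch b s / poch c s) =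
      poch (c - b) n / poch c n := by
  induction n generalizing b c with
  | zero => simp [poch_zero]
  | succ n ih =>
    have hsplit : ∑ s ∈ Finset.range (n + 1 + 1),
        (-1 : ℝ) ^ s * ((n + 1).choose s : ℝ) * (poch b s / poch c s) =
        ∑ s ∈ Finset.range (n + 1), (-1 : ℝ) ^ s * (n.choose s : ℝ) * (poch b s / poch c s) -
        b / c * ∑ s ∈ Finset.range (n + 1),
          (-1 : ℝ) ^ s * (n.choose s : ℝ) * (poch (b + 1) s / poch (c + 1) s) := by
      have hlast : ∑ s ∈ Finset.range (n + 1),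
          (-1 : ℝ) ^ s * (n.choose s : ℝ) * (poch b s / poch c s) =
          ∑ s ∈ Finset.range (n + 1 + 1),
          (-1 : ℝ) ^ s * (n.choose s : ℝ) * (poch b s / poch c s) := by
        rw [Finset.sum_range_succ _ (n + 1)]
        simp
      rw [hlast, Finset.sum_range_succ' _ (n + 1), Finset.sum_range_succ' _ (n + 1), Finset.mul_sum,
        add_sub_right_comm, ← Finset.sum_sub_distrib]
      simp only [Nat.choose_zero_right]
      congr 1
      refine Finset.sum_congr rfl fun s _ => ?_
      rw [Nat.choose_succ_succ, poch_succ_left, poch_succ_left, mul_div_mul_comm]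
      push_cast
      ring
    rw [hsplit, ih b c hc, ih (b + 1) (c + 1) (by positivity), add_sub_add_right_eq_sub]
    have h1 := poch_pos hc n
    have h2 := poch_pos (show 0 < c + 1 by positivity) n
    have h3 : poch c n * (c + n) = c * poch (c + 1) n := by rw [← poch_succ, poch_succ_left]
    have h4 : poch c n = c * poch (c + 1) n / (c + n) := by field_simp; linarith
    rw [poch_succ, poch_succ, h3, h4]
    field_simp
    ring

lemma Gamma_natCast_add_half_eq (k : ℕ) :
    Real.Gamma ((k : ℝ) + 1 / 2) =
      (Nat.factorial (2 * k) : ℝ) * √π / (4 ^ k * (Nat.factorial k : ℝ)) := by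
  induction k with
  | zero => simp [-one_div, Real.Gamma_one_half_eq]
  | succ k ih =>
    rw [show ((k + 1 : ℕ) : ℝ) + 1 / 2 = ((k : ℝ) + 1 / 2) + 1 by push_cast; ring,
      Real.Gamma_add_one (by positivity), ih, show 2 * (k + 1) = 2 * k + 1 + 1 by ring,
      Nat.factorial_succ, Nat.factorial_succ, Nat.factorial_succ]
    push_cast
    field_simp
    ring

section GegenbauerWeight

variable {a : ℝ}

lemma ofReal_rpow_mul_rpow {x : ℝ} (hx : x ∈ Set.Icc (0 : ℝ) 1) (p q : ℝ) :
    ((x ^ p * (1 - x) ^ q : ℝ) : ℂ) = (x : ℂ) ^ (p : ℂ) * (1 - (x : ℂ)) ^ (q : ℂ) := by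
  rw [Complex.ofReal_mul, Complex.ofReal_cpow hx.1, Complex.ofReal_cpow (sub_nonneg.2 hx.2)]
  push_cast
  rfl

lemma one_sub_sq_rpow_comp {x : ℝ} (hx : x ∈ Set.Icc (0 : ℝ) 1) (p : ℝ) :
    (1 - (2 * x - 1) ^ 2) ^ p = 4 ^ p * (x ^ p * (1 - x) ^ p) := by
  have h1 := hx.1
  have h2 := sub_nonneg.2 hx.2
  rw [show 1 - (2 * x - 1) ^ 2 = 4 * (x * (1 - x)) by ring,
    Real.mul_rpow (by norm_num) (by positivity), Real.mul_rpow h1 h2]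

lemma intervalIntegrable_rpow_mul_rpow (ha : -(1 / 2 : ℝ) < a) :
    IntervalIntegrable (fun x : ℝ => x ^ (a - 1 / 2) * (1 - x) ^ (a - 1 / 2)) volume 0 1 := by
  have h := Complex.betaIntegral_convergent (u := ((a + 1 / 2 : ℝ) : ℂ)) (v := ((a + 1 / 2 : ℝ) : ℂ))
    (by rw [Complex.ofReal_re]; linarith) (by rw [Complex.ofReal_re]; linarith)
  rw [intervalIntegrable_iff_integrableOn_Ioc_of_le zero_le_one] at h ⊢
  refine (IntegrableOn.congr_fun h.re (fun x hx => ?_) measurableSet_Ioc)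
  have h2 := ofReal_rpow_mul_rpow (Set.Ioc_subset_Icc_self hx) (a - 1 / 2) (a - 1 / 2)
  rw [← Complex.ofReal_re (x ^ (a - 1 / 2) * (1 - x) ^ (a - 1 / 2)), h2]
  push_cast
  ring_nf
  rfl

lemma integral_rpow_mul_rpow (ha : -(1 / 2 : ℝ) < a) :
    ∫ x in (0 : ℝ)..1, x ^ (a - 1 / 2) * (1 - x) ^ (a - 1 / 2) =
      Real.Gamma (a + 1 / 2) * Real.Gamma (a + 1 / 2) / Real.Gamma (2 * (a + 1 / 2)) := by
  have ha' : 0 < a + 1 / 2 := by linarith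
  have h := Complex.betaIntegral_eq_Gamma_mul_div ((a + 1 / 2 : ℝ) : ℂ) ((a + 1 / 2 : ℝ) : ℂ)
    (by rwa [Complex.ofReal_re]) (by rwa [Complex.ofReal_re])
  rw [← Complex.ofReal_add, Complex.Gamma_ofReal, Complex.Gamma_ofReal, ← two_mul] at h
  apply Complex.ofReal_injective
  push_cast at h ⊢
  rw [← h, Complex.betaIntegral, ← intervalIntegral.integral_ofReal]
  refine intervalIntegral.integral_congr fun x hx => ?_
  rw [Set.uIcc_of_le zero_le_one] at hx
  rw [ofReal_rpow_mul_rpow hx]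
  push_cast
  ring_nf

lemma intervalIntegrable_one_sub_sq_rpow (ha : -(1 / 2 : ℝ) < a) :
    IntervalIntegrable (fun t : ℝ => (1 - t ^ 2) ^ (a - 1 / 2)) volume (-1) 1 := by
  have h : IntervalIntegrable (fun x : ℝ => (1 - (2 * x - 1) ^ 2) ^ (a - 1 / 2)) volume 0 1 := by
    refine ((intervalIntegrable_rpow_mul_rpow ha).const_mul (4 ^ (a - 1 / 2))).congr ?_
    intro x hx
    rw [Set.uIoc_of_le zero_le_one] at hx
    exact (one_sub_sq_rpow_comp (Set.Ioc_subset_Icc_self hx) _).symm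
  have h2 := (h.comp_mul_left (c := 2⁻¹)).comp_add_right 1
  norm_num at h2
  refine h2.congr fun x _ => ?_
  congr 2
  ring

lemma integral_one_sub_sq_rpow (ha : -(1 / 2 : ℝ) < a) :
    ∫ t in (-1 : ℝ)..1, (1 - t ^ 2) ^ (a - 1 / 2) =
      √π * Real.Gamma (a + 1 / 2) / Real.Gamma (a + 1) := by
  have h := intervalIntegral.integral_comp_mul_sub (a := 0) (b := 1)
    (fun t : ℝ => (1 - t ^ 2) ^ (a - 1 / 2)) two_ne_zero 1
  have h2 : ∫ x in (0 : ℝ)..1, (1 - (2 * x - 1) ^ 2) ^ (a - 1 / 2) =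
      ∫ x in (0 : ℝ)..1, 4 ^ (a - 1 / 2) * (x ^ (a - 1 / 2) * (1 - x) ^ (a - 1 / 2)) := by
    refine intervalIntegral.integral_congr fun x hx => ?_
    rw [Set.uIcc_of_le zero_le_one] at hx
    exact one_sub_sq_rpow_comp hx _
  rw [h2, intervalIntegral.integral_const_mul, integral_rpow_mul_rpow ha] at h
  norm_num only [smul_eq_mul] at h
  have hpos : 0 < Real.Gamma (2 * (a + 1 / 2)) := Real.Gamma_pos_of_pos (by linarith)
  have hpos1 : 0 < Real.Gamma (a + 1) := Real.Gamma_pos_of_pos (by linarith)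
  have hd := Real.Gamma_mul_Gamma_add_half (a + 1 / 2)
  rw [show a + 1 / 2 + 1 / 2 = a + 1 by ring] at hd
  have h4 : (4 : ℝ) ^ (a - 1 / 2) * 2 ^ (1 - 2 * (a + 1 / 2)) = 1 / 2 := by
    rw [show (4 : ℝ) = 2 ^ (2 : ℝ) by norm_num, ← Real.rpow_mul (by norm_num),
      ← Real.rpow_add (by norm_num), show 2 * (a - 1 / 2) + (1 - 2 * (a + 1 / 2)) = -1 by ring,
      Real.rpow_neg_one]
    norm_num
  have h5 : ∫ t in (-1 : ℝ)..1, (1 - t ^ 2) ^ (a - 1 / 2) = 2 * (4 ^ (a - 1 / 2) *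
      (Real.Gamma (a + 1 / 2) * Real.Gamma (a + 1 / 2) / Real.Gamma (2 * (a + 1 / 2)))) := by
    linarith
  rw [h5, eq_div_iff hpos1.ne']
  generalize Real.Gamma (2 * (a + 1 / 2)) = G at *
  generalize Real.Gamma (a + 1 / 2) = g at *
  generalize (4 : ℝ) ^ (a - 1 / 2) = x at *
  field_simp
  linear_combination 2 * x * g * hd + 2 * g * G * √π * h4

lemma one_sub_sq_rpow_add_natCast (ha : -(1 / 2 : ℝ) < a) (s : ℕ) {t : ℝ}
    (ht : t ∈ Set.Icc (-1 : ℝ) 1) :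
    (1 - t ^ 2) ^ (a + s - 1 / 2) = (1 - t ^ 2) ^ (a - 1 / 2) * (1 - t ^ 2) ^ s := by
  have h0 : 0 ≤ 1 - t ^ 2 := by nlinarith [ht.1, ht.2]
  rcases Nat.eq_zero_or_pos s with rfl | hs
  · simp
  · have hs' : (1 : ℝ) ≤ s := by exact_mod_cast hs
    rw [← Real.rpow_add_natCast' h0 (by linarith)]
    ring_nf

lemma intervalIntegrable_one_sub_sq_rpow_mul (ha : -(1 / 2 : ℝ) < a) {g : ℝ → ℝ}
    (hg : Continuous g) :
    IntervalIntegrable (fun t : ℝ => (1 - t ^ 2) ^ (a - 1 / 2) * g t) volume (-1) 1 :=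
  (intervalIntegrable_one_sub_sq_rpow ha).mul_continuousOn hg.continuousOn

lemma integral_one_sub_sq_rpow_mul_pow_even (ha : -(1 / 2 : ℝ) < a) (k : ℕ) :
    ∫ t in (-1 : ℝ)..1, (1 - t ^ 2) ^ (a - 1 / 2) * t ^ (2 * k) =
      Real.Gamma (k + 1 / 2) * Real.Gamma (a + 1 / 2) / Real.Gamma (a + k + 1) := by
  induction k generalizing a with
  | zero => simpa [-one_div, Real.Gamma_one_half_eq] using integral_one_sub_sq_rpow ha
  | succ k ih =>
    have hstep : ∫ t in (-1 : ℝ)..1, (1 - t ^ 2) ^ (a - 1 / 2) * t ^ (2 * (k + 1)) =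
        (∫ t in (-1 : ℝ)..1, (1 - t ^ 2) ^ (a - 1 / 2) * t ^ (2 * k)) -
        ∫ t in (-1 : ℝ)..1, (1 - t ^ 2) ^ (a + 1 - 1 / 2) * t ^ (2 * k) := by
      rw [← intervalIntegral.integral_sub
        (intervalIntegrable_one_sub_sq_rpow_mul ha (by fun_prop))
        (intervalIntegrable_one_sub_sq_rpow_mul (by linarith) (by fun_prop))]
      refine intervalIntegral.integral_congr fun t ht => ?_
      rw [Set.uIcc_of_le (by norm_num)] at ht
      have := one_sub_sq_rpow_add_natCast ha 1 ht
      push_cast at this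
      simp only [this]
      ring
    have hk : (0 : ℝ) ≤ k := k.cast_nonneg
    have ha' : 0 < a + 1 / 2 := by linarith
    have hak : 0 < a + k + 1 := by linarith
    have hpos : 0 < Real.Gamma (a + k + 1) := Real.Gamma_pos_of_pos hak
    rw [hstep, ih ha, ih (by linarith), show a + 1 + 1 / 2 = a + 1 / 2 + 1 by ring,
      show a + 1 + k + 1 = a + k + 1 + 1 by ring, Nat.cast_succ,
      show a + (k + 1 : ℝ) + 1 = a + k + 1 + 1 by ring,
      show (k : ℝ) + 1 + 1 / 2 = k + 1 / 2 + 1 by ring, Real.Gamma_add_one ha'.ne',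
      Real.Gamma_add_one hak.ne', Real.Gamma_add_one (show (k : ℝ) + 1 / 2 ≠ 0 by positivity)]
    field_simp
    ring

lemma integral_one_sub_sq_rpow_mul_pow_odd (a : ℝ) (k : ℕ) :
    ∫ t in (-1 : ℝ)..1, (1 - t ^ 2) ^ (a - 1 / 2) * t ^ (2 * k + 1) = 0 := by
  have h := intervalIntegral.integral_comp_neg (a := -1) (b := 1)
    (fun t : ℝ => (1 - t ^ 2) ^ (a - 1 / 2) * t ^ (2 * k + 1))
  simp only [neg_sq, neg_neg, Odd.neg_pow (odd_two_mul_add_one k), mul_neg,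
    intervalIntegral.integral_neg] at h
  linarith

end GegenbauerWeight

lemma continuous_qOdd (r : ℕ) (l : ℝ) : Continuous (qOdd r l) := by
  unfold qOdd
  fun_prop

lemma integral_one_sub_sq_rpow_mul_qOdd_mul_pow (r : ℕ) {l : ℝ} (hl : -(1 / 2 : ℝ) < l) (n : ℕ) :
    ∫ t in (-1 : ℝ)..1, (1 - t ^ 2) ^ (l - 1 / 2) * qOdd r l t * t ^ n =
      (∫ t in (-1 : ℝ)..1, (1 - t ^ 2) ^ (l - 1 / 2) * t ^ n) +
      ∑ s ∈ Finset.range (r + 1), (-1 : ℝ) ^ s * (r.choose s : ℝ) *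
        (poch (l + r + 1) s / poch (l + 1 / 2) s) *
        ∫ t in (-1 : ℝ)..1, (1 - t ^ 2) ^ (l + s - 1 / 2) * t ^ (n + 1) := by
  have hwInt : ∀ s : ℕ, IntervalIntegrable
      (fun t : ℝ => (1 - t ^ 2) ^ (l + s - 1 / 2) * t ^ (n + 1)) volume (-1) 1 := fun s =>
    intervalIntegrable_one_sub_sq_rpow_mul
      (by have : (0 : ℝ) ≤ s := s.cast_nonneg
          linarith) (by fun_prop)
  have hsum := IntervalIntegrable.sum (Finset.range (r + 1)) fun s _ =>
    (hwInt s).const_mul ((-1 : ℝ) ^ s * (r.choose s : ℝ) *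
      (poch (l + r + 1) s / poch (l + 1 / 2) s))
  rw [Finset.sum_fn] at hsum
  simp only [← intervalIntegral.integral_const_mul]
  rw [← intervalIntegral.integral_finsetSum fun s _ => (hwInt s).const_mul _,
    ← intervalIntegral.integral_add (intervalIntegrable_one_sub_sq_rpow_mul hl (by fun_prop))
      hsum]
  refine intervalIntegral.integral_congr fun t ht => ?_
  rw [Set.uIcc_of_le (by norm_num)] at ht
  simp only [qOdd, one_sub_sq_rpow_add_natCast hl _ ht]
  rw [mul_add, add_mul, mul_one, Finset.mul_sum, Finset.mul_sum, Finset.sum_mul]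
  congr 1
  refine Finset.sum_congr rfl fun s _ => ?_
  ring

lemma integral_one_sub_sq_rpow_mul_qOdd_mul_pow_even (r : ℕ) {l : ℝ} (hl : -(1 / 2 : ℝ) < l)
    (k : ℕ) :
    ∫ t in (-1 : ℝ)..1, (1 - t ^ 2) ^ (l - 1 / 2) * qOdd r l t * t ^ (2 * k) =
      Real.Gamma (k + 1 / 2) * Real.Gamma (l + 1 / 2) / Real.Gamma (l + k + 1) := by
  rw [integral_one_sub_sq_rpow_mul_qOdd_mul_pow r hl, integral_one_sub_sq_rpow_mul_pow_even hl]
  simp only [integral_one_sub_sq_rpow_mul_pow_odd, mul_zero, Finset.sum_const_zero, add_zero]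

lemma integral_one_sub_sq_rpow_mul_qOdd_mul_pow_odd (r : ℕ) {l : ℝ} (hl : -(1 / 2 : ℝ) < l)
    (k : ℕ) :
    ∫ t in (-1 : ℝ)..1, (1 - t ^ 2) ^ (l - 1 / 2) * qOdd r l t * t ^ (2 * k + 1) =
      Real.Gamma (k + 1 + 1 / 2) * Real.Gamma (l + 1 / 2) * poch (k + 1 - r) r /
        Real.Gamma (l + k + 2 + r) := by
  have hk : (0 : ℝ) ≤ k := k.cast_nonneg
  have hl' : 0 < l + 1 / 2 := by linarith
  have hc : 0 < l + k + 2 := by linarith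
  have hΓ := Real.Gamma_pos_of_pos hc
  have hv := sum_choose_mul_poch_div_poch r (l + r + 1) (l + k + 2) hc
  rw [show l + k + 2 - (l + r + 1) = (k : ℝ) + 1 - r by ring] at hv
  rw [integral_one_sub_sq_rpow_mul_qOdd_mul_pow r hl, integral_one_sub_sq_rpow_mul_pow_odd,
    zero_add, Gamma_add_natCast hc,
    show Real.Gamma (k + 1 + 1 / 2) * Real.Gamma (l + 1 / 2) * poch (k + 1 - r) r /
      (poch (l + k + 2) r * Real.Gamma (l + k + 2)) = Real.Gamma (k + 1 + 1 / 2) *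
      Real.Gamma (l + 1 / 2) / Real.Gamma (l + k + 2) *
      (poch (k + 1 - r) r / poch (l + k + 2) r) by field_simp, ← hv, Finset.mul_sum]
  refine Finset.sum_congr rfl fun s _ => ?_
  have hs : (0 : ℝ) ≤ s := s.cast_nonneg
  rw [show 2 * k + 1 + 1 = 2 * (k + 1) by ring,
    integral_one_sub_sq_rpow_mul_pow_even (by linarith),
    show l + s + 1 / 2 = l + 1 / 2 + s by ring, Gamma_add_natCast hl', Nat.cast_succ,
    show l + s + (k + 1 : ℝ) + 1 = l + k + 2 + s by ring, Gamma_add_natCast hc]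
  have h1 := poch_pos hl' s
  have h2 := poch_pos hc s
  generalize poch (l + 1 / 2) s = p1 at *
  generalize poch (l + k + 2) s = p2 at *
  field_simp

/-- Termwise integration of the exponential series against an integrable weight. -/
lemma hasSum_integral_mul_exp {W : ℝ → ℝ} (hW : IntervalIntegrable W volume (-1) 1) (v : ℝ) :
    HasSum (fun n : ℕ => (-Complex.I * v) ^ n / (Nat.factorial n : ℂ) *
        ((∫ t in (-1 : ℝ)..1, W t * t ^ n : ℝ) : ℂ))
      (∫ t in (-1 : ℝ)..1, (W t : ℂ) * Complex.exp (-Complex.I * (v * t : ℝ))) := by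
  have hterm : ∀ n : ℕ, (-Complex.I * v) ^ n / (Nat.factorial n : ℂ) *
      ((∫ t in (-1 : ℝ)..1, W t * t ^ n : ℝ) : ℂ) =
      ∫ t in (-1 : ℝ)..1,
        (W t : ℂ) * ((-Complex.I * (v * t : ℝ)) ^ n / (Nat.factorial n : ℂ)) := by
    intro n
    rw [← intervalIntegral.integral_ofReal, ← intervalIntegral.integral_const_mul]
    refine intervalIntegral.integral_congr fun t _ => ?_
    push_cast
    ring
  simp only [hterm]
  have hsum := Real.summable_pow_div_factorial |v|
  refine intervalIntegral.hasSum_integral_of_dominated_convergence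
    (fun n t => ‖W t‖ * (|v| ^ n / (Nat.factorial n : ℝ))) (fun n => ?_)
    (fun n => .of_forall fun t ht => ?_) (.of_forall fun t _ => hsum.mul_left _) ?_
    (.of_forall fun t _ => ?_)
  · have hm : AEStronglyMeasurable (fun t => (W t : ℂ)) (volume.restrict (Set.uIoc (-1) 1)) :=
      Complex.continuous_ofReal.comp_aestronglyMeasurable hW.def'.aestronglyMeasurable
    exact hm.mul (Continuous.aestronglyMeasurable (by fun_prop))
  · rw [Set.uIoc_of_le (by norm_num)] at ht
    have ht1 : |t| ≤ 1 := abs_le.2 ⟨ht.1.le, ht.2⟩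
    rw [norm_mul, norm_div, norm_pow, norm_mul, norm_neg, Complex.norm_I, one_mul,
      Complex.norm_real, Complex.norm_real, Complex.norm_natCast, Real.norm_eq_abs (v * t), abs_mul]
    gcongr
    exact mul_le_of_le_one_right (abs_nonneg v) ht1
  · simp only [tsum_mul_left]
    exact hW.norm.mul_const _
  · have h := NormedSpace.expSeries_div_hasSum_exp (-Complex.I * ((v * t : ℝ) : ℂ))
    rw [← Complex.exp_eq_exp_ℂ] at h
    exact h.mul_left _

lemma cgeg_mul_even_term {l : ℝ} (hl : -(1 / 2 : ℝ) < l) (v : ℝ) (k : ℕ) :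
    cgeg l * ((-1) ^ k * v ^ (2 * k) / (Nat.factorial (2 * k) : ℝ) *
      (Real.Gamma (k + 1 / 2) * Real.Gamma (l + 1 / 2) / Real.Gamma (l + k + 1))) =
    Real.Gamma (l + 1) *
      ((-1 : ℝ) ^ k / (Nat.factorial k * Real.Gamma (k + l + 1)) * (v / 2) ^ (2 * k)) := by
  have h1 := Real.Gamma_pos_of_pos (show 0 < l + 1 / 2 by linarith)
  rw [cgeg, Gamma_natCast_add_half_eq, add_comm (k : ℝ) l, div_pow, pow_mul 2 2 k,
    show (2 : ℝ) ^ 2 = 4 by norm_num]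
  generalize Real.Gamma (l + 1 / 2) = g at *
  field_simp

lemma cgeg_mul_odd_term (r : ℕ) {l : ℝ} (hl : -(1 / 2 : ℝ) < l) (v : ℝ) (m : ℕ) :
    cgeg l * ((-1) ^ (m + r) * v ^ (2 * (m + r) + 1) / (Nat.factorial (2 * (m + r) + 1) : ℝ) *
      (Real.Gamma ((m + r : ℕ) + 1 + 1 / 2) * Real.Gamma (l + 1 / 2) *
        poch ((m + r : ℕ) + 1 - r) r / Real.Gamma (l + (m + r : ℕ) + 2 + r))) =
    (-1) ^ r * (v ^ (2 * r + 1) / (2 ^ (2 * r + 1) * poch (l + 1) (2 * r + 1))) *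
      (Real.Gamma (l + (2 * r + 1) + 1) * ((-1 : ℝ) ^ m /
        (Nat.factorial m * Real.Gamma (m + (l + (2 * r + 1)) + 1)) * (v / 2) ^ (2 * m))) := by
  have h1 := Real.Gamma_pos_of_pos (show 0 < l + 1 / 2 by linarith)
  have hl1 : 0 < l + 1 := by linarith
  have h2 := Gamma_add_natCast hl1 (2 * r + 1)
  have h3 := poch_natCast_add_one_mul_factorial m r
  have h4 := Gamma_natCast_add_half_eq (m + r + 1)
  have h5 : (Nat.factorial (2 * (m + r + 1)) : ℝ) =
      (2 * (m + r + 1)) * (Nat.factorial (2 * (m + r) + 1) : ℝ) := by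
    rw [show 2 * (m + r + 1) = 2 * (m + r) + 1 + 1 by ring, Nat.factorial_succ (2 * (m + r) + 1)]
    push_cast
    ring
  have h6 : poch ((m : ℝ) + 1) r = (Nat.factorial (m + r) : ℝ) / (Nat.factorial m : ℝ) := by
    rw [← h3]; field_simp
  have hp := poch_pos hl1 (2 * r + 1)
  rw [show l + (2 * r + 1) + 1 = l + 1 + (2 * r + 1 : ℕ) by push_cast; ring, h2,
    show (m : ℝ) + (l + (2 * r + 1)) + 1 = l + (m + r : ℕ) + 2 + r by push_cast; ring,
    show ((m + r : ℕ) : ℝ) + 1 - r = m + 1 by push_cast; ring, h6,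
    show ((m + r : ℕ) : ℝ) + 1 + 1 / 2 = (m + r + 1 : ℕ) + 1 / 2 by push_cast; ring, h4, h5,
    Nat.factorial_succ (m + r), cgeg]
  generalize Real.Gamma (l + 1 / 2) = g at *
  generalize poch (l + 1) (2 * r + 1) = p at *
  generalize Real.Gamma (l + (m + r : ℕ) + 2 + r) = G at *
  push_cast
  rw [show (4 : ℝ) = 2 ^ 2 by norm_num, ← pow_mul, div_pow]
  field_simp
  ring

/-- integral representation of e_{2r+1}(v, lambda). -/
theorem stmt6 (r : ℕ) (l : ℝ) (hl : -(1 / 2 : ℝ) < l) (v : ℝ) :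
    e2r1 r l v =
      (cgeg l : ℂ) * ∫ t in (-1 : ℝ)..1,
        (((1 - t ^ 2) ^ (l - 1 / 2) * qOdd r l t : ℝ) : ℂ) *
          Complex.exp (-Complex.I * (v * t : ℝ)) := by
  have hW : IntervalIntegrable (fun t : ℝ => (1 - t ^ 2) ^ (l - 1 / 2) * qOdd r l t)
      volume (-1) 1 :=
    intervalIntegrable_one_sub_sq_rpow_mul hl (continuous_qOdd r l)
  have hsum := (hasSum_integral_mul_exp hW v).mul_left (cgeg l : ℂ)
  set f : ℕ → ℂ := fun n => (cgeg l : ℂ) * ((-Complex.I * v) ^ n / (Nat.factorial n : ℂ) *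
    ((∫ t in (-1 : ℝ)..1, (1 - t ^ 2) ^ (l - 1 / 2) * qOdd r l t * t ^ n : ℝ) : ℂ)) with hf
  have hI : ∀ k : ℕ, (-Complex.I) ^ (2 * k) = (-1) ^ k := fun k => by
    rw [pow_mul, neg_sq, Complex.I_sq]
  have heven : ∀ k : ℕ, f (2 * k) = ((Real.Gamma (l + 1) *
      ((-1 : ℝ) ^ k / (Nat.factorial k * Real.Gamma (k + l + 1)) * (v / 2) ^ (2 * k)) : ℝ) : ℂ) := by
    intro k
    simp only [hf]
    rw [← cgeg_mul_even_term hl, integral_one_sub_sq_rpow_mul_qOdd_mul_pow_even r hl, mul_pow, hI]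
    push_cast
    ring
  have hodd : ∀ k : ℕ, f (2 * k + 1) = -Complex.I * ((cgeg l * ((-1) ^ k * v ^ (2 * k + 1) /
      (Nat.factorial (2 * k + 1) : ℝ) * (Real.Gamma (k + 1 + 1 / 2) * Real.Gamma (l + 1 / 2) *
        poch (k + 1 - r) r / Real.Gamma (l + k + 2 + r))) : ℝ) : ℂ) := by
    intro k
    simp only [hf]
    rw [integral_one_sub_sq_rpow_mul_qOdd_mul_pow_odd r hl, mul_pow, pow_succ (-Complex.I), hI]
    push_cast
    ring
  have hse : Summable fun k => f (2 * k) :=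
    hsum.summable.comp_injective (i := fun k : ℕ => 2 * k) fun a b h => by simpa using h
  have hso : Summable fun k => f (2 * k + 1) :=
    hsum.summable.comp_injective (i := fun k : ℕ => 2 * k + 1) fun a b h => by simpa using h
  rw [← hsum.tsum_eq, ← tsum_even_add_odd hse hso, ← hso.sum_add_tsum_nat_add r,
    Finset.sum_eq_zero fun k hk => ?_, zero_add, e2r1]
  · congr 1
    · rw [tsum_congr heven, ← Complex.ofReal_tsum, tsum_mul_left, nbessel]
    · simp only [hodd, cgeg_mul_odd_term r hl]
      rw [tsum_mul_left, ← Complex.ofReal_tsum, tsum_mul_left, tsum_mul_left, nbessel]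
      push_cast
      ring
  · rw [hodd, poch_eq_zero_of_lt (Finset.mem_range.1 hk)]
    simp
end

section
/- Let g be a Schwartz function on ℝ and n ∈ ℤ_{≥0}. Define a_n(g)(v) = Σ_{k=0}^{n} Σ_{l=0}^{k} (1/(k−l)!) · (g^{(2l+1)}(0)/(2l+1)!) · v^{2k+1} e^{−v²}. Then g − a_n(g) is a Schwartz function all of whose odd derivatives of order ≤ 2n+1 vanish at 0; that is, (g − a_n(g))^{(2s+1)}(0) = 0 for every s = 0, 1, …, n. -/
open Real Finset

/-- The correction term a_n(g)(v). -/
noncomputable def aApprox (g : ℝ → ℝ) (n : ℕ) (v : ℝ) : ℝ :=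
  ∑ k ∈ Finset.range (n + 1), ∑ l ∈ Finset.range (k + 1),
    (1 / (Nat.factorial (k - l)) : ℝ) *
      (iteratedDeriv (2 * l + 1) g 0 / Nat.factorial (2 * l + 1)) *
      (v ^ (2 * k + 1) * Real.exp (-v ^ 2))

/-- The Gaussian monomial `x ^ j * exp (-x ^ 2)`. -/
noncomputable def gaussianMonomial (j : ℕ) (x : ℝ) : ℝ :=
  x ^ j * Real.exp (-x ^ 2)

theorem contDiff_gaussianMonomial (j : ℕ) {m : WithTop ℕ∞} :
    ContDiff ℝ m (gaussianMonomial j) := by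
  unfold gaussianMonomial
  fun_prop

theorem deriv_gaussianMonomial (j : ℕ) :
    deriv (gaussianMonomial j) =
      fun x ↦ (j : ℝ) * gaussianMonomial (j - 1) x - 2 * gaussianMonomial (j + 1) x := by
  funext x
  have h : HasDerivAt (gaussianMonomial j)
      ((j : ℝ) * x ^ (j - 1) * Real.exp (-x ^ 2) +
        x ^ j * (Real.exp (-x ^ 2) * -((2 : ℕ) * x ^ (2 - 1)))) x :=
    (hasDerivAt_pow j x).mul ((hasDerivAt_pow 2 x).neg.exp)
  rw [h.deriv]
  simp only [gaussianMonomial]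
  push_cast
  ring

theorem iteratedDeriv_succ_gaussianMonomial (m j : ℕ) (x : ℝ) :
    iteratedDeriv (m + 1) (gaussianMonomial j) x =
      j * iteratedDeriv m (gaussianMonomial (j - 1)) x -
        2 * iteratedDeriv m (gaussianMonomial (j + 1)) x := by
  rw [iteratedDeriv_succ', deriv_gaussianMonomial, iteratedDeriv_fun_sub,
    iteratedDeriv_const_mul_field, iteratedDeriv_const_mul_field]
  · exact (contDiff_const.mul (contDiff_gaussianMonomial _)).contDiffAt
  · exact (contDiff_const.mul (contDiff_gaussianMonomial _)).contDiffAt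

theorem abs_pow_mul_exp_neg_sq_le (k : ℕ) (x : ℝ) :
    |x| ^ k * Real.exp (-x ^ 2) ≤ 1 + k.factorial := by
  have h1 : |x| ^ k ≤ 1 + (x ^ 2) ^ k := by
    rw [← sq_abs, ← pow_mul, mul_comm, pow_mul]
    nlinarith [sq_nonneg (|x| ^ k - 1)]
  have h2 : (x ^ 2) ^ k ≤ k.factorial * Real.exp (x ^ 2) := by
    have := Real.pow_div_factorial_le_exp (x ^ 2) (sq_nonneg x) k
    rwa [div_le_iff₀' (by positivity)] at this
  have h3 : 1 ≤ Real.exp (x ^ 2) := Real.one_le_exp (sq_nonneg x)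
  rw [Real.exp_neg, ← div_eq_mul_inv, div_le_iff₀ (Real.exp_pos _)]
  linarith

theorem gaussianMonomial_decay (k m : ℕ) : ∀ j : ℕ, ∃ C : ℝ, ∀ x : ℝ,
    |x| ^ k * |iteratedDeriv m (gaussianMonomial j) x| ≤ C := by
  induction m with
  | zero =>
    intro j
    refine ⟨1 + (k + j).factorial, fun x ↦ ?_⟩
    simpa [gaussianMonomial, abs_mul, pow_add, mul_assoc] using
      abs_pow_mul_exp_neg_sq_le (k + j) x
  | succ m ih =>
    intro j
    obtain ⟨A, hA⟩ := ih (j - 1)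
    obtain ⟨B, hB⟩ := ih (j + 1)
    refine ⟨j * A + 2 * B, fun x ↦ ?_⟩
    rw [iteratedDeriv_succ_gaussianMonomial]
    set a := iteratedDeriv m (gaussianMonomial (j - 1)) x
    set b := iteratedDeriv m (gaussianMonomial (j + 1)) x
    calc |x| ^ k * |j * a - 2 * b|
        ≤ |x| ^ k * (j * |a| + 2 * |b|) := by
          gcongr
          refine (abs_sub _ _).trans_eq ?_
          simp [abs_mul]
      _ = j * (|x| ^ k * |a|) + 2 * (|x| ^ k * |b|) := by ring
      _ ≤ j * A + 2 * B := by
          gcongr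
          · exact hA x
          · exact hB x

/-- The Gaussian monomial as a Schwartz function. -/
noncomputable def gaussianMonomialSchwartz (j : ℕ) : SchwartzMap ℝ ℝ where
  toFun := gaussianMonomial j
  smooth' := contDiff_gaussianMonomial j
  decay' k m := by
    obtain ⟨C, hC⟩ := gaussianMonomial_decay k m j
    refine ⟨C, fun x ↦ ?_⟩
    rw [norm_iteratedFDeriv_eq_norm_iteratedDeriv]
    exact hC x

theorem iteratedDeriv_gaussianMonomial_zero_of_lt {m j : ℕ} (h : m < j) :
    iteratedDeriv m (gaussianMonomial j) 0 = 0 := by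
  induction m generalizing j with
  | zero => simp [gaussianMonomial, h.ne']
  | succ m ih =>
    rw [iteratedDeriv_succ_gaussianMonomial, ih (by omega), ih (by omega)]
    simp

theorem iteratedDeriv_gaussianMonomial_zero {m i j : ℕ} (h : m = j + 2 * i) :
    iteratedDeriv m (gaussianMonomial j) 0 = m.factorial * ((-1) ^ i / i.factorial) := by
  induction m generalizing i j with
  | zero =>
    obtain rfl : j = 0 := by omega
    obtain rfl : i = 0 := by omega
    simp [gaussianMonomial]
  | succ m ih =>
    have hj : (j : ℝ) * iteratedDeriv m (gaussianMonomial (j - 1)) 0 =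
        j * (m.factorial * ((-1) ^ i / i.factorial)) := by
      rcases j with _ | j
      · simp
      · rw [Nat.add_sub_cancel, ih (i := i) (by omega)]
    have hm : (m : ℝ) + 1 = j + 2 * i := by exact_mod_cast h
    rw [iteratedDeriv_succ_gaussianMonomial, hj, Nat.factorial_succ]
    push_cast
    rw [hm]
    rcases i with _ | i
    · rw [iteratedDeriv_gaussianMonomial_zero_of_lt (by omega)]
      simp
    · rw [ih (i := i) (by omega), Nat.factorial_succ]
      push_cast
      field_simp
      ring

theorem sum_neg_one_pow_div_factorial (d : ℕ) :
    ∑ i ∈ Finset.range (d + 1),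
      (1 / (i.factorial : ℝ)) * ((-1) ^ (d - i) / ((d - i).factorial : ℝ)) =
        if d = 0 then 1 else 0 := by
  have h := add_pow (1 : ℝ) (-1) d
  rw [add_neg_cancel, zero_pow_eq] at h
  have hd : (d.factorial : ℝ) ≠ 0 := by positivity
  apply mul_left_cancel₀ hd
  rw [Finset.mul_sum]
  trans (if d = 0 then (1 : ℝ) else 0)
  · rw [h]
    refine Finset.sum_congr rfl fun i hi ↦ ?_
    rw [Nat.cast_choose ℝ (Nat.lt_succ_iff.mp (Finset.mem_range.mp hi))]
    field_simp
    simp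
  · split_ifs with h0 <;> simp [h0]

theorem sum_sum_inverse_exp_coeff (c : ℕ → ℝ) (s : ℕ) :
    ∑ k ∈ Finset.range (s + 1), ∑ l ∈ Finset.range (k + 1),
      (1 / ((k - l).factorial : ℝ)) * c l * ((-1) ^ (s - k) / ((s - k).factorial : ℝ)) =
        c s := by
  rw [Finset.sum_comm' (t' := Finset.range (s + 1)) (s' := fun l ↦ Finset.Ico l (s + 1))
    (by intro k l; simp only [Finset.mem_range, Finset.mem_Ico]; omega)]
  rw [Finset.sum_eq_single_of_mem s (by simp)]
  · simp
  · intro l hl hls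
    have hl' : l < s + 1 := Finset.mem_range.mp hl
    have h := sum_neg_one_pow_div_factorial (s - l)
    rw [if_neg (by omega)] at h
    rw [Finset.sum_Ico_eq_sum_range, ← mul_zero (c l), ← h, Finset.mul_sum,
      show s + 1 - l = s - l + 1 by omega]
    refine Finset.sum_congr rfl fun i _ ↦ ?_
    rw [Nat.add_sub_cancel_left, Nat.sub_add_eq]
    ring

theorem iteratedDeriv_aApprox (g : ℝ → ℝ) (n s : ℕ) (hs : s ≤ n) :
    iteratedDeriv (2 * s + 1) (aApprox g n) 0 = iteratedDeriv (2 * s + 1) g 0 := by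
  have hsmooth (c : ℝ) (j : ℕ) :
      ContDiffAt ℝ (2 * s + 1 : ℕ) (fun v ↦ c * gaussianMonomial j v) 0 :=
    (contDiff_const.mul (contDiff_gaussianMonomial j)).contDiffAt
  change iteratedDeriv (2 * s + 1) (fun v ↦ ∑ k ∈ Finset.range (n + 1),
    ∑ l ∈ Finset.range (k + 1), (1 / (Nat.factorial (k - l)) : ℝ) *
      (iteratedDeriv (2 * l + 1) g 0 / Nat.factorial (2 * l + 1)) *
        gaussianMonomial (2 * k + 1) v) 0 = _
  rw [iteratedDeriv_fun_sum fun k _ ↦ ContDiffAt.sum fun l _ ↦ hsmooth _ _]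
  simp_rw [iteratedDeriv_fun_sum fun l _ ↦ hsmooth _ _, iteratedDeriv_const_mul_field]
  rw [← Finset.sum_subset (Finset.range_mono (Nat.succ_le_succ hs))]
  · have hfac : ((2 * s + 1).factorial : ℝ) ≠ 0 := by positivity
    have h := sum_sum_inverse_exp_coeff
      (fun l ↦ iteratedDeriv (2 * l + 1) g 0 / Nat.factorial (2 * l + 1)) s
    rw [eq_div_iff hfac] at h
    rw [← h, Finset.sum_mul]
    refine Finset.sum_congr rfl fun k hk ↦ ?_
    rw [Finset.sum_mul]
    refine Finset.sum_congr rfl fun l _ ↦ ?_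
    have hk' : k < s + 1 := Finset.mem_range.mp hk
    rw [iteratedDeriv_gaussianMonomial_zero (i := s - k) (by omega)]
    ring
  · intro k _ hk
    have hk' : ¬ k < s + 1 := fun h ↦ hk (Finset.mem_range.mpr h)
    simp [iteratedDeriv_gaussianMonomial_zero_of_lt (show 2 * s + 1 < 2 * k + 1 by omega)]

/-- The correction term `aApprox g n` as a Schwartz function. -/
noncomputable def aApproxSchwartz (g : ℝ → ℝ) (n : ℕ) : SchwartzMap ℝ ℝ :=
  ∑ k ∈ Finset.range (n + 1), ∑ l ∈ Finset.range (k + 1),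
    ((1 / (Nat.factorial (k - l)) : ℝ) *
      (iteratedDeriv (2 * l + 1) g 0 / Nat.factorial (2 * l + 1))) •
        gaussianMonomialSchwartz (2 * k + 1)

theorem coe_aApproxSchwartz (g : ℝ → ℝ) (n : ℕ) :
    ⇑(aApproxSchwartz g n) = aApprox g n := by
  funext v
  simp only [aApproxSchwartz, _root_.sum_apply, _root_.smul_apply, smul_eq_mul]
  rfl

/-- g - a_n(g) is a Schwartz function whose odd derivatives of order
at most 2n+1 vanish at the origin. -/
theorem stmt15 (g : SchwartzMap ℝ ℝ) (n : ℕ) :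
    ∃ h : SchwartzMap ℝ ℝ,
      (∀ v : ℝ, h v = g v - aApprox (⇑g) n v) ∧
      (∀ s : ℕ, s ≤ n → iteratedDeriv (2 * s + 1) (⇑h) 0 = 0) := by
  refine ⟨g - aApproxSchwartz g n, fun v ↦ ?_, fun s hs ↦ ?_⟩
  · rw [_root_.sub_apply, coe_aApproxSchwartz]
  · change iteratedDeriv (2 * s + 1) (⇑g - ⇑(aApproxSchwartz g n)) 0 = 0
    rw [iteratedDeriv_sub (g.smooth _).contDiffAt ((aApproxSchwartz g n).smooth _).contDiffAt,
      coe_aApproxSchwartz, iteratedDeriv_aApprox _ _ _ hs, sub_self]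
end
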